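/- arXiv:1012.0675 — 5 statements merged into one kernel-verified Lean document; each statement's English description precedes it below -/
import Mathlib

section
/- Let n ≥ 1 and let ψ : ℕ → [0,∞) be any non-negative function. Then the n-dimensional Lebesgue measure of the multiplicative approximation set S^×_n(ψ) is either 0 or 1. -/
open MeasureTheory Filter

/-- The distance from a real number `y` to the nearest integer:
`‖y‖ = min {|y - p| : p ∈ ℤ}`. -/
noncomputable def distNearestInt (y : ℝ) : ℝ := ⨅ p : ℤ, |y - (p : ℝ)|

/-- The multiplicative approximation set
`S^×_n(ψ) = {x ∈ [0,1]^n : ∏ᵢ ‖q xᵢ‖ < ψ(q) for infinitely many q ∈ ℕ}`. -/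
def Smul (n : ℕ) (ψ : ℕ → ℝ) : Set (Fin n → ℝ) :=
  {x | (∀ i, x i ∈ Set.Icc (0 : ℝ) 1) ∧
    {q : ℕ | 0 < q ∧ ∏ i, distNearestInt (q * x i) < ψ q}.Infinite}

/-!
On the circle, `‖q u‖ < ψ q` says that some torsion point of order `b ∣ q` lies within
`φ q = ψ q / q` of `u`. If `φ → 0` and `u` is not itself a torsion point, each order
`b` serves only finitely many `q`, so infinitely many solutions `q` amount to infinitely many
orders `b` with a torsion point within `sup_k φ (b k)` of `u`. Gallagher's zero-one law applies to
the latter condition and settles dimension one.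

In dimension `n + 1`, fixing the first coordinate `x` off the torsion points turns the condition
into the `n`-dimensional one for `ψ q / ‖q x‖`, and fixing the remaining coordinates turns it into
a one-dimensional one. Hence almost every fibre in either direction is null or conull, which forces
the set itself to be null or conull.
-/

open scoped Topology

lemma eventuallyConst_ae_prod {α β : Type*} [MeasurableSpace α] [MeasurableSpace β]
    {μ : Measure α} {ν : Measure β} [SFinite μ] [SFinite ν] {A : Set (α × β)}
    (hA : MeasurableSet A)
    (hfst : ∀ᵐ x ∂μ, EventuallyConst {y | (x, y) ∈ A} (ae ν))
    (hsnd : ∀ᵐ y ∂ν, EventuallyConst {x | (x, y) ∈ A} (ae μ)) :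
    EventuallyConst A (ae (μ.prod ν)) := by
  simp only [eventuallyConst_set, Set.mem_ofPred_eq] at hfst hsnd ⊢
  by_cases hfull : ∀ᵐ x ∂μ, ∀ᵐ y ∂ν, (x, y) ∈ A
  · exact .inl ((Measure.ae_prod_mem_iff_ae_ae_mem hA).2 hfull)
  right
  let Y : Set β := {y | ∀ᵐ x ∂μ, (x, y) ∈ A}
  have hY : MeasurableSet Y :=
    measurable_measure_prodMk_right (μ := μ) hA.compl (measurableSet_singleton 0)
  have mem_of_mem_Y : ∀ᵐ x ∂μ, ∀ᵐ y ∂ν, y ∈ Y → (x, y) ∈ A := by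
    rw [Measure.ae_ae_comm ((measurable_snd hY).imp hA)]
    refine .of_forall fun y => ?_
    by_cases hy : y ∈ Y
    · filter_upwards [hy] with x hx _ using hx
    · exact .of_forall fun x hy' => absurd hy' hy
  obtain ⟨x, hx_notFull, hx, hxY⟩ :=
    ((not_eventually.1 hfull).and_eventually (hfst.and mem_of_mem_Y)).exists
  have notMem_Y : ∀ᵐ y ∂ν, y ∉ Y := by
    filter_upwards [hx.resolve_left hx_notFull, hxY] with y hy hyY using mt hyY hy
  have hnull : ∀ᵐ y ∂ν, ∀ᵐ x ∂μ, (x, y) ∉ A := by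
    filter_upwards [hsnd, notMem_Y] with y hy hyY using hy.resolve_left hyY
  exact (Measure.ae_prod_mem_iff_ae_ae_mem hA.compl).2
    ((Measure.ae_ae_comm (p := fun x y => (x, y) ∉ A) hA.compl).2 hnull)

lemma eventuallyConst_ae_of_cons {α : Type*} [MeasureSpace α] [SigmaFinite (volume : Measure α)]
    {n : ℕ} {S : Set (Fin (n + 1) → α)} (hS : MeasurableSet S)
    (htail : ∀ᵐ x : α, EventuallyConst {y : Fin n → α | Fin.cons x y ∈ S} (ae volume))
    (hhead : ∀ᵐ y : Fin n → α, EventuallyConst {x : α | Fin.cons x y ∈ S} (ae volume)) :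
    EventuallyConst S (ae volume) := by
  let e := MeasurableEquiv.piFinSuccAbove (fun _ : Fin (n + 1) => α) 0
  have he : MeasurePreserving e := volume_preserving_piFinSuccAbove _ 0
  have he_symm (x : α) (y : Fin n → α) : e.symm (x, y) = Fin.cons x y := Fin.insertNth_zero' x y
  have hprod : EventuallyConst (e.symm ⁻¹' S) (ae (volume.prod volume)) := by
    refine eventuallyConst_ae_prod (e.symm.measurable hS) ?_ ?_
    all_goals simpa only [Set.mem_preimage, he_symm]
  have hpre : EventuallyConst (e ⁻¹' (e.symm ⁻¹' S)) (ae volume) :=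
    hprod.comp_tendsto he.quasiMeasurePreserving.tendsto_ae
  rwa [← Set.preimage_comp, e.symm_comp_self, Set.preimage_id] at hpre

lemma frequently_cofinite_exists {α β : Type*} {l : Filter β} {P : α → β → Prop}
    (hP : ∀ a, ∀ᶠ b in l, ¬ P a b) (h : ∃ᶠ b in l, ∃ a, P a b) :
    ∃ᶠ a in cofinite, ∃ b, P a b := by
  intro hfin
  have hfin : {a | ∃ b, P a b}.Finite := by simpa [eventually_cofinite] using hfin
  obtain ⟨b, ⟨a, hab⟩, hb⟩ := (h.and_eventually (hfin.eventually_all.2 fun a _ => hP a)).exists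
  exact hb a ⟨b, hab⟩ hab

section Multiples

/-- The supremum of `φ` over the positive multiples of `b`: the radius at which a torsion point of
order `b` accounts for all denominators divisible by `b` at once. -/
noncomputable def supMultiples (φ : ℕ → ℝ) (b : ℕ) : ℝ := ⨆ k : ℕ+, φ (b * k)

variable {φ : ℕ → ℝ}

lemma lt_supMultiples_iff (hφ : BddAbove (Set.range φ)) {b : ℕ} (hb : 0 < b) {a : ℝ} :
    a < supMultiples φ b ↔ ∃ q, 0 < q ∧ b ∣ q ∧ a < φ q := by
  have hbdd : BddAbove (Set.range fun k : ℕ+ => φ (b * k)) :=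
    hφ.mono (Set.range_comp_subset_range (fun k : ℕ+ => b * k) φ)
  rw [supMultiples, lt_ciSup_iff hbdd]
  constructor
  · rintro ⟨k, hk⟩
    exact ⟨b * k, Nat.mul_pos hb k.pos, dvd_mul_right _ _, hk⟩
  · rintro ⟨_, hq, ⟨k, rfl⟩, hk⟩
    exact ⟨⟨k, Nat.pos_of_mul_pos_left hq⟩, hk⟩

lemma tendsto_supMultiples {L : ℝ} (hφ : Tendsto φ atTop (𝓝 L)) :
    Tendsto (supMultiples φ) atTop (𝓝 L) := by
  refine tendsto_order.2 ⟨fun a ha => ?_, fun a ha => ?_⟩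
  · filter_upwards [hφ.eventually_const_lt ha, eventually_gt_atTop 0] with b hab hb
    exact (lt_supMultiples_iff hφ.bddAbove_range hb).2 ⟨b, hb, dvd_rfl, hab⟩
  · obtain ⟨a', hLa', ha'a⟩ := exists_between ha
    filter_upwards [eventually_forall_ge_atTop.2 (hφ.eventually_lt_const hLa')] with b hb
    exact (ciSup_le fun k => (hb _ (Nat.le_mul_of_pos_right b k.pos)).le).trans_lt ha'a

end Multiples

section Torsion

lemma norm_nsmul_lt_of_mem_approxAddOrderOf {A : Type*} [SeminormedAddCommGroup A] {u : A}
    {b q : ℕ} {r : ℝ} (hq : 0 < q) (hbq : b ∣ q) (hu : u ∈ approxAddOrderOf A b r) :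
    ‖q • u‖ < q * r := by
  obtain ⟨v, rfl, huv⟩ := mem_approx_add_orderOf_iff.1 hu
  calc ‖q • u‖ = ‖q • (u - v)‖ := by
        rw [nsmul_sub, addOrderOf_dvd_iff_nsmul_eq_zero.1 hbq, sub_zero]
    _ ≤ q * ‖u - v‖ := norm_nsmul_le
    _ < q * r := by gcongr; exact mem_ball_iff_norm.1 huv

lemma eventually_notMem_approxAddOrderOf {A ι : Type*} [NormedAddCommGroup A] {l : Filter ι}
    {φ : ι → ℝ} (hφ : Tendsto φ l (𝓝 0)) {u : A} {b : ℕ} (hb : 0 < b) (hu : b • u ≠ 0) :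
    ∀ᶠ i in l, u ∉ approxAddOrderOf A b (φ i) := by
  have hlim : Tendsto (fun i => b * φ i) l (𝓝 0) := by simpa using hφ.const_mul (b : ℝ)
  filter_upwards [hlim.eventually_lt_const (norm_pos_iff.2 hu)] with i hi hmem
  exact (norm_nsmul_lt_of_mem_approxAddOrderOf hb dvd_rfl hmem).not_gt hi

lemma mem_approxAddOrderOf_supMultiples_iff {A : Type*} [SeminormedAddCommGroup A] {u : A}
    {φ : ℕ → ℝ} (hφ : BddAbove (Set.range φ)) {b : ℕ} (hb : 0 < b) :
    u ∈ approxAddOrderOf A b (supMultiples φ b) ↔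
      ∃ q, 0 < q ∧ b ∣ q ∧ u ∈ approxAddOrderOf A b (φ q) := by
  simp only [mem_approx_add_orderOf_iff, Metric.mem_ball, lt_supMultiples_iff hφ hb]
  grind

end Torsion

section Circle

variable {T : ℝ}

lemma exists_coe_eq_and_abs_eq_norm (u : AddCircle T) :
    ∃ x : ℝ, (x : AddCircle T) = u ∧ |x| = ‖u‖ := by
  obtain ⟨x, rfl⟩ := QuotientAddGroup.mk_surjective u
  refine ⟨x - round (T⁻¹ * x) * T, ?_, (AddCircle.norm_eq T).symm⟩
  rw [← zsmul_eq_mul, AddCircle.coe_sub, AddCircle.coe_zsmul, AddCircle.coe_period, smul_zero,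
    sub_zero]

lemma norm_nsmul_lt_mul_iff {u : AddCircle T} {q : ℕ} (hq : 0 < q) {r : ℝ} :
    ‖q • u‖ < q * r ↔ ∃ b, b ∣ q ∧ u ∈ approxAddOrderOf (AddCircle T) b r := by
  refine ⟨fun h => ?_, fun ⟨b, hbq, hu⟩ => norm_nsmul_lt_of_mem_approxAddOrderOf hq hbq hu⟩
  obtain ⟨x, hx, hxnorm⟩ := exists_coe_eq_and_abs_eq_norm (q • u)
  have hq' : (0 : ℝ) < q := Nat.cast_pos.2 hq
  have hqw : q • ((x / q : ℝ) : AddCircle T) = q • u := by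
    rw [← AddCircle.coe_nsmul, nsmul_eq_mul, mul_div_cancel₀ _ hq'.ne', hx]
  refine ⟨addOrderOf (u - ((x / q : ℝ) : AddCircle T)), ?_,
    mem_approx_add_orderOf_iff.2 ⟨_, rfl, ?_⟩⟩
  · rw [addOrderOf_dvd_iff_nsmul_eq_zero, nsmul_sub, hqw, sub_self]
  rw [mem_ball_iff_norm, sub_sub_cancel]
  calc ‖((x / q : ℝ) : AddCircle T)‖ ≤ |x / q| := QuotientAddGroup.norm_mk_le_norm
    _ = ‖q • u‖ / q := by rw [abs_div, Nat.abs_cast, hxnorm]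
    _ < r := by rwa [div_lt_iff₀' hq']

lemma mem_addWellApproximable_supMultiples_iff {φ : ℕ → ℝ} (hφ : Tendsto φ atTop (𝓝 0))
    {u : AddCircle T} (hu : addOrderOf u = 0) :
    u ∈ addWellApproximable (AddCircle T) (supMultiples φ) ↔
      ∃ᶠ q : ℕ in atTop, ‖q • u‖ < q * φ q := by
  let P (b q : ℕ) : Prop := 0 < q ∧ b ∣ q ∧ u ∈ approxAddOrderOf (AddCircle T) b (φ q)
  have finite_denominators (b : ℕ) : ∀ᶠ q in cofinite, ¬ P b q := by
    rw [Nat.cofinite_eq_atTop]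
    rcases b.eq_zero_or_pos with rfl | hb
    · exact .of_forall fun q ⟨hq, hdvd, _⟩ => hq.ne' (zero_dvd_iff.1 hdvd)
    · filter_upwards [eventually_notMem_approxAddOrderOf hφ hb (addOrderOf_eq_zero_iff'.1 hu b hb)]
        with q hq hP using hq hP.2.2
  have finite_orders (q : ℕ) : ∀ᶠ b in cofinite, ¬ P b q := by
    rw [Nat.cofinite_eq_atTop]
    filter_upwards [eventually_gt_atTop q] with b hb hP
    exact (Nat.le_of_dvd hP.1 hP.2.1).not_gt hb
  calc u ∈ addWellApproximable (AddCircle T) (supMultiples φ)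
      ↔ ∃ᶠ b in cofinite, ∃ q, P b q := by
        rw [mem_add_wellApproximable_iff, ← Nat.cofinite_eq_atTop, cofinite.blimsup_set_eq,
          Set.mem_ofPred_eq, ← frequently_cofinite_iff_infinite, Nat.cofinite_eq_atTop]
        refine frequently_congr ?_
        filter_upwards [eventually_gt_atTop 0] with b hb
        rw [mem_approxAddOrderOf_supMultiples_iff hφ.bddAbove_range hb, and_iff_right hb]
    _ ↔ ∃ᶠ q in cofinite, ∃ b, P b q :=
        ⟨frequently_cofinite_exists finite_orders, frequently_cofinite_exists finite_denominators⟩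
    _ ↔ ∃ᶠ q : ℕ in atTop, ‖q • u‖ < q * φ q := by
        rw [Nat.cofinite_eq_atTop]
        refine frequently_congr ?_
        filter_upwards [eventually_gt_atTop 0] with q hq
        simp only [P, and_iff_right hq, norm_nsmul_lt_mul_iff hq]

variable [Fact (0 < T)]

instance : NullSingletonClass (volume : Measure (AddCircle T)) where
  measure_singleton u := by
    have := AddCircle.volume_closedBall T (x := u) 0
    simpa [(Fact.out : 0 < T).le] using this

variable (T) in
lemma ae_addOrderOf_eq_zero : ∀ᵐ u : AddCircle T, addOrderOf u = 0 := by
  simp only [addOrderOf_eq_zero_iff', ae_all_iff]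
  intro q hq
  exact measure_eq_zero_iff_ae_notMem.1 ((AddCircle.finite_torsion T hq).measure_zero volume)

lemma eventuallyConst_frequently_norm_nsmul_lt {ψ : ℕ → ℝ} (hψ : ∀ q, 0 ≤ ψ q) :
    EventuallyConst {u : AddCircle T | ∃ᶠ q in atTop, ‖q • u‖ < ψ q} (ae volume) := by
  have hT : 0 < T := Fact.out
  by_cases hlarge : ∃ᶠ q in atTop, T < ψ q
  · refine eventuallyConst_set.2 (.inl (.of_forall fun u => hlarge.mono fun q hq => ?_))
    calc ‖q • u‖ ≤ |T| / 2 := AddCircle.norm_le_half_period T hT.ne'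
      _ < T := by rw [abs_of_pos hT]; exact half_lt_self hT
      _ < ψ q := hq
  have hlim : Tendsto (fun q : ℕ => ψ q / q) atTop (𝓝 0) := by
    refine squeeze_zero' (.of_forall fun q => div_nonneg (hψ q) q.cast_nonneg) ?_
      (tendsto_const_div_atTop_nhds_zero_nat T)
    filter_upwards [not_frequently.1 hlarge] with q hq
    gcongr
    exact not_lt.1 hq
  have gallagher := AddCircle.addWellApproximable_ae_empty_or_univ (T := T) _
    (tendsto_supMultiples hlim)
  refine (eventuallyConst_set.2 gallagher.symm).congr ?_
  filter_upwards [ae_addOrderOf_eq_zero T] with u hu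
  refine propext ((mem_addWellApproximable_supMultiples_iff hlim hu).trans (frequently_congr ?_))
  filter_upwards [eventually_gt_atTop 0] with q hq
  rw [mul_div_cancel₀ _ (Nat.cast_ne_zero.2 hq.ne')]

end Circle

section Torus

/-- The analogue on the torus `(ℝ ⧸ ℤ T)^n` of the multiplicative approximation set:
the points `u` with `∏ᵢ ‖q uᵢ‖ < ψ q` for infinitely many `q`. -/
def mulWellApproximable (T : ℝ) (n : ℕ) (ψ : ℕ → ℝ) : Set (Fin n → AddCircle T) :=
  {u | ∃ᶠ q in atTop, ∏ i, ‖q • u i‖ < ψ q}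

variable {T : ℝ}

lemma measurableSet_mulWellApproximable (n : ℕ) (ψ : ℕ → ℝ) :
    MeasurableSet (mulWellApproximable T n ψ) := by
  have hopen (q : ℕ) : IsOpen {u : Fin n → AddCircle T | ∏ i, ‖q • u i‖ < ψ q} :=
    isOpen_lt (by fun_prop) continuous_const
  have hlimsup : mulWellApproximable T n ψ =
      limsup (fun q : ℕ => {u : Fin n → AddCircle T | ∏ i, ‖q • u i‖ < ψ q}) atTop := by
    ext u
    rw [mem_limsup_iff_frequently_mem]
    rfl
  rw [hlimsup]
  exact .measurableSet_limsup fun q => (hopen q).measurableSet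

lemma cons_mem_mulWellApproximable_iff_tail {n : ℕ} {ψ : ℕ → ℝ} {x : AddCircle T}
    (hx : addOrderOf x = 0) (y : Fin n → AddCircle T) :
    Fin.cons x y ∈ mulWellApproximable T (n + 1) ψ ↔
      y ∈ mulWellApproximable T n fun q => ψ q / ‖q • x‖ := by
  refine frequently_congr ?_
  filter_upwards [eventually_gt_atTop 0] with q hq
  rw [Fin.prod_univ_succ, lt_div_iff₀' (norm_pos_iff.2 (addOrderOf_eq_zero_iff'.1 hx q hq))]
  simp only [Fin.cons_zero, Fin.cons_succ]

lemma cons_mem_mulWellApproximable_iff_head {n : ℕ} {ψ : ℕ → ℝ} (x : AddCircle T)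
    {y : Fin n → AddCircle T} (hy : ∀ i, addOrderOf (y i) = 0) :
    Fin.cons x y ∈ mulWellApproximable T (n + 1) ψ ↔
      ∃ᶠ q in atTop, ‖q • x‖ < ψ q / ∏ i, ‖q • y i‖ := by
  refine frequently_congr ?_
  filter_upwards [eventually_gt_atTop 0] with q hq
  have hprod : 0 < ∏ i, ‖q • y i‖ :=
    Finset.prod_pos fun i _ => norm_pos_iff.2 (addOrderOf_eq_zero_iff'.1 (hy i) q hq)
  rw [Fin.prod_univ_succ, lt_div_iff₀ hprod]
  simp only [Fin.cons_zero, Fin.cons_succ]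

theorem eventuallyConst_mulWellApproximable [Fact (0 < T)] (n : ℕ) {ψ : ℕ → ℝ}
    (hψ : ∀ q, 0 ≤ ψ q) : EventuallyConst (mulWellApproximable T n ψ) (ae volume) := by
  induction n generalizing ψ with
  | zero => exact .of_subsingleton_left
  | succ n ih =>
    refine eventuallyConst_ae_of_cons (measurableSet_mulWellApproximable (n + 1) ψ) ?_ ?_
    · filter_upwards [ae_addOrderOf_eq_zero T] with x hx
      simp only [cons_mem_mulWellApproximable_iff_tail hx]
      exact ih fun q => div_nonneg (hψ q) (norm_nonneg _)
    · have hy : ∀ᵐ y : Fin n → AddCircle T, ∀ i, addOrderOf (y i) = 0 :=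
        ae_all_iff.2 fun i =>
          (Measure.quasiMeasurePreserving_eval (fun _ : Fin n => (volume : Measure (AddCircle T)))
            i).ae (ae_addOrderOf_eq_zero T)
      filter_upwards [hy] with y hy
      simp only [cons_mem_mulWellApproximable_iff_head _ hy]
      exact eventuallyConst_frequently_norm_nsmul_lt fun q =>
        div_nonneg (hψ q) (Finset.prod_nonneg fun i _ => norm_nonneg _)

end Torus

section Cube

lemma distNearestInt_eq_norm (y : ℝ) : distNearestInt y = ‖(y : UnitAddCircle)‖ := by
  rw [UnitAddCircle.norm_eq]
  exact le_antisymm (ciInf_le ⟨0, Set.forall_mem_range.2 fun _ => abs_nonneg _⟩ (round y))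
    (le_ciInf (round_le y))

lemma measurePreserving_coe_Icc_pi (ι : Type*) [Fintype ι] :
    MeasurePreserving (fun (x : ι → ℝ) i => (x i : UnitAddCircle))
      (volume.restrict (Set.univ.pi fun _ => Set.Icc 0 1)) volume := by
  have hcircle := UnitAddCircle.measurePreserving_mk 0
  rw [zero_add, restrict_Ioc_eq_restrict_Icc] at hcircle
  rw [volume_pi, Measure.restrict_pi_pi]
  exact measurePreserving_pi _ _ fun _ => hcircle

lemma Smul_eq_preimage_inter (n : ℕ) (ψ : ℕ → ℝ) :
    Smul n ψ = (fun (x : Fin n → ℝ) i => (x i : UnitAddCircle)) ⁻¹' mulWellApproximable 1 n ψ ∩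
      Set.univ.pi fun _ => Set.Icc 0 1 := by
  ext x
  have hinf : {q : ℕ | 0 < q ∧ ∏ i, distNearestInt (q * x i) < ψ q}.Infinite ↔
      ∃ᶠ q : ℕ in atTop, ∏ i, ‖q • (x i : UnitAddCircle)‖ < ψ q := by
    rw [← Nat.frequently_atTop_iff_infinite]
    refine frequently_congr ?_
    filter_upwards [eventually_gt_atTop 0] with q hq
    simp only [and_iff_right hq, distNearestInt_eq_norm, ← nsmul_eq_mul,
      AddCircle.coe_nsmul]
  rw [Set.inter_comm]
  exact and_congr Set.mem_univ_pi.symm hinf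

lemma volume_Smul (n : ℕ) (ψ : ℕ → ℝ) :
    volume (Smul n ψ) = volume (mulWellApproximable 1 n ψ) := by
  have hπ := measurePreserving_coe_Icc_pi (Fin n)
  have hS := measurableSet_mulWellApproximable (T := 1) n ψ
  rw [Smul_eq_preimage_inter, ← Measure.restrict_apply (hπ.measurable hS),
    hπ.measure_preimage hS.nullMeasurableSet]

end Cube

/-- Multiplicative zero-one law: for any `n ≥ 1` and any non-negative `ψ`,
the Lebesgue measure of `S^×_n(ψ)` is either 0 or 1. -/
theorem multiplicative_zero_one_law_S (n : ℕ) (hn : 1 ≤ n)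
    (ψ : ℕ → ℝ) (hψ : ∀ q, 0 ≤ ψ q) :
    volume (Smul n ψ) = 0 ∨ volume (Smul n ψ) = 1 := by
  have : IsProbabilityMeasure (volume : Measure UnitAddCircle) := ⟨UnitAddCircle.measure_univ⟩
  rw [volume_Smul]
  rcases eventuallyConst_set'.1 (eventuallyConst_mulWellApproximable (T := 1) n hψ)
    with hnull | hfull
  · exact .inl ((measure_congr hnull).trans measure_empty)
  · exact .inr ((measure_congr hfull).trans measure_univ)
end

section
/- Let n ≥ 1 and let ψ : ℕ → [0,∞) be any non-negative function. Then the n-dimensional Lebesgue measure of the multiplicative approximation set with coprimality D^×_n(ψ) is either 0 or 1. -/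
open MeasureTheory Filter

/-- The distance from a real number `y` to the nearest integer coprime to `q`:
`‖y‖' = min {|y - p| : p ∈ ℤ, gcd(p,q) = 1}`. -/
noncomputable def distNearestCoprime (q : ℕ) (y : ℝ) : ℝ :=
  sInf {d : ℝ | ∃ p : ℤ, Int.gcd p (q : ℤ) = 1 ∧ d = |y - (p : ℝ)|}

/-- The multiplicative approximation set with the coprimality condition:
`D^×_n(ψ) = {x ∈ [0,1]^n : ∏ᵢ ‖q xᵢ‖' < ψ(q) for infinitely many q ∈ ℕ}`. -/
def Dmul (n : ℕ) (ψ : ℕ → ℝ) : Set (Fin n → ℝ) :=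
  {x | (∀ i, x i ∈ Set.Icc (0 : ℝ) 1) ∧
    {q : ℕ | 0 < q ∧ ∏ i, distNearestCoprime q (q * x i) < ψ q}.Infinite}

/-!
Almost every `x` makes all the factors `‖q xᵢ‖'` positive, so freezing all but one coordinate, or
only one, turns the condition `∏ ‖q xᵢ‖' < ψ q` into a condition of the same kind on the remaining
coordinates, with `ψ` rescaled. Hence almost every section of the limsup set in either direction is
null or conull, as soon as the law is known in smaller dimension. A measurable set in a product with
this property agrees almost everywhere with a set of the form `A × Y` and with one of the form
`X × B`, so it is itself null or conull, and the law follows by induction on the dimension.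

In dimension one, the rescaled `ψ q / q` need not tend to zero as Gallagher's theorem requires.
If it does not, every `x` lies in the limsup set: once `q > N!`, some prime power `p ^ k > N`
divides `q`, so that every real is within `q / N` of an integer coprime to `q`.
-/

section ZeroOneLaw

variable {X Y : Type*} [MeasurableSpace X] [MeasurableSpace Y] {μ : Measure X} {ν : Measure Y}

theorem exists_ae_prod_iff_fst_mem [SFinite ν] {P : X → Y → Prop}
    (hP : MeasurableSet {p : X × Y | P p.1 p.2}) (hsec : ∀ᵐ x ∂μ, EventuallyConst (P x) (ae ν)) :
    ∃ A : Set X, ∀ᵐ p ∂μ.prod ν, (P p.1 p.2 ↔ p.1 ∈ A) := by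
  let A : Set X := {x | ∀ᵐ y ∂ν, P x y}
  have hA : MeasurableSet A :=
    measurable_measure_prodMk_left hP.compl (measurableSet_singleton 0)
  refine ⟨A, (Measure.ae_prod_iff_ae_ae (hP.iff (hA.preimage measurable_fst))).2 ?_⟩
  filter_upwards [hsec] with x hx
  by_cases hfull : ∀ᵐ y ∂ν, P x y
  · filter_upwards [hfull] with y hy using iff_of_true hy hfull
  · filter_upwards [(eventuallyConst_pred.1 hx).resolve_left hfull] with y hy
    exact iff_of_false hy hfull

theorem eventuallyConst_ae_prod_of_sections [SFinite μ] [SFinite ν] {P : X → Y → Prop}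
    (hP : MeasurableSet {p : X × Y | P p.1 p.2})
    (hX : ∀ᵐ x ∂μ, EventuallyConst (P x) (ae ν))
    (hY : ∀ᵐ y ∂ν, EventuallyConst (P · y) (ae μ)) :
    EventuallyConst (fun p : X × Y ↦ P p.1 p.2) (ae (μ.prod ν)) := by
  obtain ⟨A, hA⟩ := exists_ae_prod_iff_fst_mem hP hX
  obtain ⟨B, hB⟩ := exists_ae_prod_iff_fst_mem (P := flip P) (measurable_swap hP) hY
  replace hB : ∀ᵐ p ∂μ.prod ν, (P p.1 p.2 ↔ p.2 ∈ B) :=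
    Measure.measurePreserving_swap.quasiMeasurePreserving.ae hB
  have hAB : ∀ᵐ x ∂μ, ∀ᵐ y ∂ν, (x ∈ A ↔ y ∈ B) :=
    Measure.ae_ae_of_ae_prod <| by
      filter_upwards [hA, hB] with p hpA hpB using hpA.symm.trans hpB
  rcases eq_zero_or_neZero μ with rfl | _
  · rw [Measure.zero_prod, ae_zero]
    exact .bot
  obtain ⟨x₀, hx₀⟩ := hAB.exists
  have hconst : (fun _ ↦ x₀ ∈ A) =ᵐ[μ.prod ν] fun p ↦ P p.1 p.2 := by
    filter_upwards [hB, Measure.quasiMeasurePreserving_snd.ae hx₀] with p hpB hp₀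
    exact propext (hp₀.trans hpB.symm)
  exact (EventuallyConst.const _).congr hconst

/-- The zero-one law for the limsup sets `{x | f q x < ψ q for infinitely many q}`: whatever the
threshold `ψ`, such a set is `μ`-null or has `μ`-null complement. Stated through `EventuallyConst`
so that it applies to infinite measures as well. -/
def ZeroOneLaw (μ : Measure X) (f : ℕ → X → ℝ) : Prop :=
  ∀ ψ : ℕ → ℝ, EventuallyConst (fun x ↦ ∃ᶠ q in atTop, f q x < ψ q) (ae μ)

theorem measurableSet_frequently_lt {f : ℕ → X → ℝ} (hf : ∀ q, Measurable (f q)) (ψ : ℕ → ℝ) :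
    MeasurableSet {x | ∃ᶠ q in atTop, f q x < ψ q} := by
  have : {x | ∃ᶠ q in atTop, f q x < ψ q} = limsup (fun q ↦ {x | f q x < ψ q}) atTop :=
    Set.ext fun x ↦ by simp only [mem_limsup_iff_frequently_mem, Set.mem_ofPred_eq]
  rw [this]
  exact .measurableSet_limsup fun q ↦ measurableSet_lt (hf q) measurable_const

namespace ZeroOneLaw

theorem comp_quasiMeasurePreserving {f : ℕ → Y → ℝ} (hf : ZeroOneLaw ν f) {g : X → Y}
    (hg : Measure.QuasiMeasurePreserving g μ ν) : ZeroOneLaw μ fun q x ↦ f q (g x) :=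
  fun ψ ↦ (hf ψ).comp_tendsto hg.tendsto_ae

theorem const_mul {f : ℕ → X → ℝ} (hf : ZeroOneLaw μ f) {c : ℕ → ℝ}
    (hc : ∀ᶠ q in atTop, 0 < c q) : ZeroOneLaw μ fun q x ↦ c q * f q x := by
  intro ψ
  convert hf fun q ↦ ψ q / c q using 2 with x
  refine frequently_congr ?_
  filter_upwards [hc] with q hq
  rw [lt_div_iff₀' hq]

theorem prod [SFinite μ] [SFinite ν] {f : ℕ → X → ℝ} {g : ℕ → Y → ℝ}
    (hf : ZeroOneLaw μ f) (hg : ZeroOneLaw ν g)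
    (hfm : ∀ q, Measurable (f q)) (hgm : ∀ q, Measurable (g q))
    (hfpos : ∀ᵐ x ∂μ, ∀ᶠ q in atTop, 0 < f q x) (hgpos : ∀ᵐ y ∂ν, ∀ᶠ q in atTop, 0 < g q y) :
    ZeroOneLaw (μ.prod ν) fun q p ↦ f q p.1 * g q p.2 := by
  intro ψ
  have hmeas : ∀ q, Measurable fun p : X × Y ↦ f q p.1 * g q p.2 := fun q ↦
    ((hfm q).comp measurable_fst).mul ((hgm q).comp measurable_snd)
  refine eventuallyConst_ae_prod_of_sections (P := fun x y ↦ ∃ᶠ q in atTop, f q x * g q y < ψ q)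
    (measurableSet_frequently_lt hmeas ψ) ?_ ?_
  · filter_upwards [hfpos] with x hx using hg.const_mul hx ψ
  · filter_upwards [hgpos] with y hy
    simpa only [mul_comm] using hf.const_mul hy ψ

theorem pi {n : ℕ} {α : Fin n → Type*} [∀ i, MeasurableSpace (α i)] {ρ : ∀ i, Measure (α i)}
    [∀ i, SigmaFinite (ρ i)] {f : ∀ i, ℕ → α i → ℝ} (hf : ∀ i, ZeroOneLaw (ρ i) (f i))
    (hfm : ∀ i q, Measurable (f i q)) (hfpos : ∀ i, ∀ᵐ x ∂ρ i, ∀ᶠ q in atTop, 0 < f i q x) :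
    ZeroOneLaw (Measure.pi ρ) fun q x ↦ ∏ i, f i q (x i) := by
  induction n with
  | zero =>
    intro ψ
    simpa only [Finset.univ_eq_empty, Finset.prod_empty] using .const _
  | succ n ih =>
    let tail (i : Fin n) : Fin (n + 1) := Fin.succAbove 0 i
    have htail := ih (fun i ↦ hf (tail i)) (fun i ↦ hfm (tail i)) fun i ↦ hfpos (tail i)
    have htailm (q : ℕ) : Measurable fun x : ∀ i, α (tail i) ↦ ∏ i, f (tail i) q (x i) :=
      Finset.measurable_fun_prod _ fun i _ ↦ (hfm (tail i) q).comp (measurable_pi_apply i)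
    have htailpos : ∀ᵐ x ∂Measure.pi fun i ↦ ρ (tail i),
        ∀ᶠ q in atTop, 0 < ∏ i, f (tail i) q (x i) := by
      have hcoord : ∀ᵐ x ∂Measure.pi fun i ↦ ρ (tail i),
          ∀ i, ∀ᶠ q in atTop, 0 < f (tail i) q (x i) :=
        ae_all_iff.2 fun i ↦
          (Measure.tendsto_eval_ae_ae (μ := fun i ↦ ρ (tail i))).eventually (hfpos (tail i))
      filter_upwards [hcoord] with x hx
      filter_upwards [eventually_all.2 hx] with q hq using Finset.prod_pos fun i _ ↦ hq i
    convert ((hf 0).prod htail (hfm 0) htailm (hfpos 0) htailpos).comp_quasiMeasurePreserving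
      (measurePreserving_piFinSuccAbove ρ 0).quasiMeasurePreserving using 3 with q x
    exact Fin.prod_univ_succAbove _ 0

end ZeroOneLaw

end ZeroOneLaw

section DistNearestCoprime

theorem distNearestCoprime_eq_infDist (q : ℕ) (y : ℝ) :
    distNearestCoprime q y = Metric.infDist y ((↑) '' {p : ℤ | Int.gcd p q = 1}) := by
  rw [Metric.infDist_eq_iInf, ← sInf_image', Set.image_image]
  simp only [distNearestCoprime, Set.image, Real.dist_eq, Set.mem_ofPred_eq, eq_comm]

theorem nonempty_setOf_gcd_eq_one (q : ℕ) : {p : ℤ | Int.gcd p q = 1}.Nonempty :=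
  ⟨1, Int.gcd_one_left q⟩

theorem distNearestCoprime_lt_iff {q : ℕ} {y c : ℝ} :
    distNearestCoprime q y < c ↔ ∃ p : ℤ, Int.gcd p q = 1 ∧ |y - p| < c := by
  rw [distNearestCoprime_eq_infDist,
    Metric.infDist_lt_iff ((nonempty_setOf_gcd_eq_one q).image _), Set.exists_mem_image]
  rfl

theorem measurable_distNearestCoprime (q : ℕ) : Measurable (distNearestCoprime q) := by
  rw [funext (distNearestCoprime_eq_infDist q)]
  exact (Metric.continuous_infDist_pt _).measurable

theorem distNearestCoprime_pos {y : ℝ} (q : ℕ) (hy : Irrational y) :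
    0 < distNearestCoprime q y := by
  have hclosed : IsClosed (((↑) : ℤ → ℝ) '' {p | Int.gcd p q = 1}) :=
    Int.isClosedEmbedding_coe_real.isClosedMap _ (isClosed_discrete _)
  rw [distNearestCoprime_eq_infDist, ← hclosed.notMem_iff_infDist_pos
    ((nonempty_setOf_gcd_eq_one q).image _)]
  rintro ⟨p, -, rfl⟩
  exact hy.ne_int p rfl

theorem ae_eventually_distNearestCoprime_pos :
    ∀ᵐ x : ℝ, ∀ᶠ q : ℕ in atTop, 0 < distNearestCoprime q (q * x) := by
  have hirr : ∀ᵐ x : ℝ, Irrational x := (Set.countable_range ((↑) : ℚ → ℝ)).ae_notMem volume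
  filter_upwards [hirr] with x hx
  filter_upwards [eventually_ne_atTop 0] with q hq
  exact distNearestCoprime_pos q (hx.natCast_mul hq)

end DistNearestCoprime

section CoprimeIntegers

theorem exists_not_dvd_abs_sub_le_one {a : ℤ} (ha : ¬IsUnit a) (z : ℝ) :
    ∃ s : ℤ, ¬a ∣ s ∧ |z - s| ≤ 1 := by
  have hle := Int.floor_le z
  have hlt := Int.lt_floor_add_one z
  by_cases hdvd : a ∣ ⌊z⌋
  · refine ⟨⌊z⌋ + 1, fun h ↦ ha (isUnit_iff_dvd_one.2 ((Int.dvd_add_right hdvd).1 h)), ?_⟩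
    push_cast
    exact abs_le.2 ⟨by linarith, by linarith⟩
  · exact ⟨⌊z⌋, hdvd, abs_le.2 ⟨by linarith, by linarith⟩⟩

-- The integers `m * s + p ^ k` with `p ∤ s` are coprime to `p ^ k * m`
-- and have gaps at most `2 * m`.
theorem exists_isCoprime_prime_pow_mul_abs_sub_le {p m : ℕ} (hp : p.Prime) (hpm : p.Coprime m)
    (hm : 0 < m) (k : ℕ) (y : ℝ) :
    ∃ a : ℤ, IsCoprime a (p ^ k * m) ∧ |y - a| ≤ m := by
  have hpZ : Prime (p : ℤ) := Nat.prime_iff_prime_int.1 hp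
  have hmR : (0 : ℝ) < m := Nat.cast_pos.2 hm
  obtain ⟨s, hps, hs⟩ := exists_not_dvd_abs_sub_le_one hpZ.not_isUnit ((y - p ^ k) / m)
  have hpow_m : IsCoprime (p ^ k : ℤ) m := (Nat.isCoprime_iff_coprime.2 hpm).pow_left
  have hpow_s : IsCoprime (p ^ k : ℤ) s := (hpZ.coprime_iff_not_dvd.2 hps).pow_left
  refine ⟨m * s + p ^ k, .mul_right ?_ ?_, ?_⟩
  · simpa only [mul_one] using (hpow_m.mul_right hpow_s).symm.add_mul_left_left 1
  · simpa only [add_comm] using hpow_m.add_mul_left_left s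
  · calc |y - ((m * s + p ^ k : ℤ) : ℝ)| = |m * ((y - p ^ k) / m - s)| := by
          congr 1
          push_cast
          field_simp
          ring
      _ = m * |(y - p ^ k) / m - s| := by rw [abs_mul, abs_of_pos hmR]
      _ ≤ m := mul_le_of_le_one_right hmR.le hs

theorem exists_prime_pow_dvd_of_factorial_lt {N q : ℕ} (hq : N.factorial < q) :
    ∃ p k : ℕ, p.Prime ∧ p ^ k ∣ q ∧ N < p ^ k := by
  by_contra! hsmall
  have hdvd : q ∣ N.factorial := (Nat.dvd_iff_prime_pow_dvd_dvd _ _).2 fun p k hp hpk ↦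
    Nat.dvd_factorial (pow_pos hp.pos k) (hsmall p k hp hpk)
  exact (Nat.le_of_dvd N.factorial_pos hdvd).not_gt hq

theorem exists_gcd_eq_one_abs_sub_lt {N q : ℕ} (hN : 0 < N) (hq : N.factorial < q) (y : ℝ) :
    ∃ a : ℤ, Int.gcd a q = 1 ∧ |y - a| < q / N := by
  have hq₀ : q ≠ 0 := Nat.ne_zero_of_lt hq
  obtain ⟨p, k, hp, hkq, hNk⟩ := exists_prime_pow_dvd_of_factorial_lt hq
  obtain ⟨j, m, hpm, rfl⟩ := Nat.exists_eq_pow_mul_and_not_dvd hq₀ p hp.ne_one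
  have hm : 0 < m := Nat.pos_of_ne_zero (right_ne_zero_of_mul hq₀)
  have hNj : N < p ^ j := hNk.trans_le <| Nat.le_of_dvd (pow_pos hp.pos j)
    (((hp.coprime_iff_not_dvd.2 hpm).pow_left k).dvd_of_dvd_mul_right hkq)
  obtain ⟨a, hacop, ha⟩ :=
    exists_isCoprime_prime_pow_mul_abs_sub_le hp (hp.coprime_iff_not_dvd.2 hpm) hm j y
  refine ⟨a, ?_, ha.trans_lt ?_⟩
  · rw [← Int.isCoprime_iff_gcd_eq_one]
    exact_mod_cast hacop
  · rw [lt_div_iff₀ (Nat.cast_pos.2 hN), mul_comm]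
    exact_mod_cast Nat.mul_lt_mul_of_pos_right hNj hm

theorem eventually_distNearestCoprime_lt {c : ℝ} (hc : 0 < c) :
    ∀ᶠ q : ℕ in atTop, ∀ y, distNearestCoprime q y < c * q := by
  obtain ⟨N, hN, hNc⟩ : ∃ N : ℕ, 0 < N ∧ 1 / (N : ℝ) < c :=
    (Real.exists_nat_pos_inv_lt hc).imp (by simp)
  filter_upwards [eventually_gt_atTop N.factorial] with q hq y
  obtain ⟨a, haq, ha⟩ := exists_gcd_eq_one_abs_sub_lt hN hq y
  refine distNearestCoprime_lt_iff.2 ⟨a, haq, ha.trans_le ?_⟩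
  rw [div_eq_inv_mul, ← one_div]
  gcongr

end CoprimeIntegers

section Gallagher

theorem distNearestCoprime_lt_iff_mem_approxAddOrderOf {q : ℕ} (hq : 0 < q) {x c : ℝ} :
    distNearestCoprime q (q * x) < c ↔
      (x : UnitAddCircle) ∈ approxAddOrderOf UnitAddCircle q (c / q) := by
  have hqR : (0 : ℝ) < q := Nat.cast_pos.2 hq
  have hscale (a : ℤ) : |q * x - a| < c ↔ |x - a / q| < c / q := by
    rw [lt_div_iff₀' hqR]
    nth_rw 2 [← abs_of_pos hqR]
    rw [← abs_mul, mul_sub, mul_div_cancel₀ _ hqR.ne']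
  simp only [distNearestCoprime_lt_iff, hscale]
  constructor
  · rintro ⟨a, haq, ha⟩
    refine mem_approx_add_orderOf_iff.2 ⟨((a / q : ℝ) : UnitAddCircle), ?_, ?_⟩
    · simpa only [mul_one] using AddCircle.addOrderOf_div_of_gcd_eq_one' (p := (1 : ℝ)) hq haq
    · rw [mem_ball_iff_norm, ← AddCircle.coe_sub, UnitAddCircle.norm_eq]
      refine lt_of_le_of_lt ?_ ha
      simpa using round_le (x - a / q) 0
  · rw [UnitAddCircle.mem_approxAddOrderOf_iff hq]
    rintro ⟨m, -, hmq, hm⟩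
    refine ⟨m + q * round (x - m / q), ?_, ?_⟩
    · rwa [Int.gcd_add_mul_left_left, Int.gcd_natCast_natCast]
    · rw [← AddCircle.coe_sub, UnitAddCircle.norm_eq] at hm
      convert hm using 2
      push_cast
      field_simp
      ring

theorem mem_addWellApproximable_iff_frequently {A : Type*} [SeminormedAddGroup A] {δ : ℕ → ℝ}
    {a : A} : a ∈ addWellApproximable A δ ↔ ∃ᶠ q in atTop, a ∈ approxAddOrderOf A q (δ q) := by
  rw [mem_add_wellApproximable_iff, ← Nat.cofinite_eq_atTop, cofinite.blimsup_set_eq,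
    Nat.cofinite_eq_atTop, Set.mem_ofPred_eq, ← Nat.frequently_atTop_iff_infinite]
  refine frequently_congr ?_
  filter_upwards [eventually_gt_atTop 0] with q hq using and_iff_right hq

theorem addWellApproximable_eq_univ {δ : ℕ → ℝ} {c : ℝ} (hc : 0 < c)
    (hδ : ∃ᶠ q in atTop, c ≤ δ q) : addWellApproximable UnitAddCircle δ = Set.univ := by
  refine Set.eq_univ_of_forall fun u ↦ ?_
  induction u using QuotientAddGroup.induction_on with | H x => ?_
  refine mem_addWellApproximable_iff_frequently.2 <|
    (hδ.and_eventually ((eventually_distNearestCoprime_lt hc).and (eventually_gt_atTop 0))).mono ?_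
  rintro q ⟨hcδ, hlt, hq⟩
  rw [← mul_div_cancel_right₀ (δ q) (Nat.cast_ne_zero.2 hq.ne' : (q : ℝ) ≠ 0)]
  refine (distNearestCoprime_lt_iff_mem_approxAddOrderOf hq).1 ((hlt _).trans_le ?_)
  gcongr

theorem approxAddOrderOf_max_zero (A : Type*) [SeminormedAddGroup A] (n : ℕ) (δ : ℝ) :
    approxAddOrderOf A n (max δ 0) = approxAddOrderOf A n δ := by
  rcases le_total δ 0 with h | h
  · simp only [approxAddOrderOf, max_eq_right h, Metric.thickening_of_nonpos h,
      Metric.thickening_of_nonpos le_rfl]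
  · rw [max_eq_left h]

theorem eventuallyConst_addWellApproximable (δ : ℕ → ℝ) :
    EventuallyConst (· ∈ addWellApproximable UnitAddCircle δ) (ae volume) := by
  by_cases hlarge : ∃ c > 0, ∃ᶠ q in atTop, c ≤ δ q
  · obtain ⟨c, hc, hcδ⟩ := hlarge
    rw [addWellApproximable_eq_univ hc hcδ]
    exact .const True
  · push Not at hlarge
    have hpos : addWellApproximable UnitAddCircle (fun q ↦ max (δ q) 0) =
        addWellApproximable UnitAddCircle δ := by
      ext u
      simp only [mem_addWellApproximable_iff_frequently, approxAddOrderOf_max_zero]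
    have htendsto : Tendsto (fun q ↦ max (δ q) 0) atTop (nhds 0) := by
      refine Metric.tendsto_nhds.2 fun ε hε ↦ ?_
      filter_upwards [hlarge ε hε] with q hq
      rw [dist_zero_right, Real.norm_of_nonneg (le_max_right _ _)]
      exact max_lt hq hε
    rw [← hpos, eventuallyConst_pred]
    exact (AddCircle.addWellApproximable_ae_empty_or_univ _ htendsto).symm

theorem quasiMeasurePreserving_coe_addCircle (T : ℝ) [hT : Fact (0 < T)] :
    Measure.QuasiMeasurePreserving ((↑) : ℝ → AddCircle T) where
  measurable := AddCircle.measurable_mk'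
  absolutelyContinuous := by
    refine Measure.AbsolutelyContinuous.mk fun s hs hs₀ ↦ ?_
    rw [Measure.map_apply AddCircle.measurable_mk' hs]
    have hpiece (n : ℤ) : volume (((↑) : ℝ → AddCircle T) ⁻¹' s ∩
        Set.Ioc (0 + n • T) (0 + (n + 1) • T)) = 0 := by
      have hnull := (AddCircle.measurePreserving_mk T (0 + n • T)).measure_preimage
        hs.nullMeasurableSet
      rwa [Measure.restrict_apply (AddCircle.measurable_mk' hs), hs₀, add_assoc,
        ← add_one_zsmul] at hnull
    rw [← Set.inter_univ (_ ⁻¹' s), ← iUnion_Ioc_add_zsmul hT.out 0, Set.inter_iUnion]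
    exact measure_iUnion_null hpiece

theorem zeroOneLaw_distNearestCoprime :
    ZeroOneLaw volume fun q (x : ℝ) ↦ distNearestCoprime q (q * x) := by
  intro ψ
  convert (eventuallyConst_addWellApproximable fun q ↦ ψ q / q).comp_tendsto
    (quasiMeasurePreserving_coe_addCircle 1).tendsto_ae using 2 with x
  rw [Function.comp_apply, mem_addWellApproximable_iff_frequently]
  refine frequently_congr ?_
  filter_upwards [eventually_gt_atTop 0] with q hq
  exact distNearestCoprime_lt_iff_mem_approxAddOrderOf hq

end Gallagher

theorem zeroOneLaw_prod_distNearestCoprime (n : ℕ) :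
    ZeroOneLaw volume fun q (x : Fin n → ℝ) ↦ ∏ i, distNearestCoprime q (q * x i) :=
  ZeroOneLaw.pi (α := fun _ ↦ ℝ) (ρ := fun _ ↦ volume)
    (f := fun _ q x ↦ distNearestCoprime q (q * x)) (fun _ ↦ zeroOneLaw_distNearestCoprime)
    (fun _ q ↦ (measurable_distNearestCoprime q).comp (measurable_const_mul _))
    fun _ ↦ ae_eventually_distNearestCoprime_pos

theorem Dmul_eq_Icc_inter (n : ℕ) (ψ : ℕ → ℝ) :
    Dmul n ψ = Set.Icc 0 1 ∩
      {x | ∃ᶠ q in atTop, ∏ i, distNearestCoprime q (q * x i) < ψ q} := by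
  ext x
  refine and_congr (by simp [Set.mem_Icc, Pi.le_def, forall_and]) ?_
  rw [← Nat.frequently_atTop_iff_infinite]
  refine frequently_congr ?_
  filter_upwards [eventually_gt_atTop 0] with q hq using and_iff_right hq

/-- Multiplicative zero-one law with coprimality: for any `n ≥ 1` and any
non-negative `ψ`, the Lebesgue measure of `D^×_n(ψ)` is either 0 or 1. -/
theorem multiplicative_zero_one_law_D (n : ℕ) (hn : 1 ≤ n)
    (ψ : ℕ → ℝ) (hψ : ∀ q, 0 ≤ ψ q) :
    volume (Dmul n ψ) = 0 ∨ volume (Dmul n ψ) = 1 := by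
  rw [Dmul_eq_Icc_inter]
  have hcube : volume (Set.Icc (0 : Fin n → ℝ) 1) = 1 := by simp [Real.volume_Icc_pi]
  rcases eventuallyConst_pred.1 (zeroOneLaw_prod_distNearestCoprime n ψ) with hfull | hnull
  · right
    rw [measure_inter_conull (mem_ae_iff.1 hfull), hcube]
  · left
    exact measure_mono_null Set.inter_subset_right (measure_eq_zero_iff_ae_notMem.2 hnull)
end

section
/- (Cross fibering principle.) Let μ be a σ-finite measure on a measurable space X, let ν be a σ-finite measure on a measurable space Y, and let S ⊂ X × Y be measurable with respect to the product measure μ × ν. Then S is (μ × ν)-trivial if and only if: for μ-almost every x ∈ X the fiber S_x := {y ∈ Y : (x,y) ∈ S} is ν-trivial, and for ν-almost every y ∈ Y the fiber S^y := {x ∈ X : (x,y) ∈ S} is μ-trivial. -/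
open MeasureTheory Filter

/-!
If almost every fiber of `S`, in both directions, is null or co-null, then `S` agrees almost
everywhere with a cylinder `A × Y` and also with a cylinder `X × B`. The indicator of `S` is thus
a.e. equal both to a function of `x` alone and to a function of `y` alone; by Fubini, freezing one
generic `x` in this identity shows that it is a.e. constant.

Following Mathlib's treatment of ergodicity, triviality of `S` for `μ` is expressed as
`EventuallyConst S (ae μ)`.
-/

theorem eventuallyConst_set_ae_iff {α : Type*} [MeasurableSpace α] {μ : Measure α} {s : Set α} :
    EventuallyConst s (ae μ) ↔ μ s = 0 ∨ μ sᶜ = 0 := by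
  rw [eventuallyConst_set, measure_eq_zero_iff_ae_notMem, or_comm]
  rfl

section Product

variable {X Y Z : Type*} [MeasurableSpace X] [MeasurableSpace Y] {μ : Measure X} {ν : Measure Y}
  [SFinite ν]

theorem ae_eventuallyConst_prodMk_left {f : X × Y → Z}
    (hf : EventuallyConst f (ae (μ.prod ν))) :
    ∀ᵐ x ∂μ, EventuallyConst (fun y ↦ f (x, y)) (ae ν) := by
  obtain hZ | hZ := isEmpty_or_nonempty Z
  · exact .of_forall fun _ ↦ .of_subsingleton_right
  obtain ⟨c, hc⟩ := hf.eventuallyEq_const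
  filter_upwards [Measure.ae_ae_of_ae_prod hc] with x hx
  exact eventuallyConst_iff_exists_eventuallyEq.2 ⟨c, hx⟩

theorem ae_eventuallyConst_prodMk_right [SFinite μ] {f : X × Y → Z}
    (hf : EventuallyConst f (ae (μ.prod ν))) :
    ∀ᵐ y ∂ν, EventuallyConst (fun x ↦ f (x, y)) (ae μ) := by
  have hswap : EventuallyConst (f ∘ Prod.swap) (ae (ν.prod μ)) :=
    hf.comp_tendsto Measure.measurePreserving_swap.quasiMeasurePreserving.tendsto_ae
  exact ae_eventuallyConst_prodMk_left (f := f ∘ Prod.swap) hswap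

theorem eventuallyConst_comp_snd_of_comp_fst_ae_eq {g : X → Z} {h : Y → Z}
    (hgh : g ∘ Prod.fst =ᵐ[μ.prod ν] h ∘ Prod.snd) :
    EventuallyConst (h ∘ Prod.snd) (ae (μ.prod ν)) := by
  obtain rfl | hμ := eq_zero_or_neZero μ
  · simp
  obtain ⟨x, hx⟩ : ∃ x, (fun _ ↦ g x) =ᵐ[ν] h := (Measure.ae_ae_of_ae_prod hgh).exists
  have hh : EventuallyConst h (ae ν) := (EventuallyConst.const (g x)).congr hx
  exact hh.comp_tendsto Measure.quasiMeasurePreserving_snd.tendsto_ae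

theorem exists_ae_eq_preimage_fst_of_measurableSet {S : Set (X × Y)} (hS : MeasurableSet S)
    (hfib : ∀ᵐ x ∂μ, EventuallyConst {y | (x, y) ∈ S} (ae ν)) :
    ∃ A : Set X, S =ᵐ[μ.prod ν] Prod.fst ⁻¹' A := by
  let A : Set X := {x | ∀ᵐ y ∂ν, (x, y) ∈ S}
  have hA : MeasurableSet A :=
    measurable_measure_prodMk_left hS.compl (measurableSet_singleton 0)
  have hmeas : MeasurableSet {z : X × Y | z ∈ S ↔ z.1 ∈ A} := hS.iff (measurable_fst hA)
  refine ⟨A, eventuallyEq_set.2 <| (Measure.ae_prod_iff_ae_ae hmeas).2 ?_⟩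
  filter_upwards [hfib] with x hx
  by_cases hxA : x ∈ A
  · filter_upwards [hxA] with y hy using iff_of_true hy hxA
  · filter_upwards [(eventuallyConst_set.1 hx).resolve_left hxA] with y hy using iff_of_false hy hxA

theorem exists_ae_eq_preimage_fst {S : Set (X × Y)} (hS : NullMeasurableSet S (μ.prod ν))
    (hfib : ∀ᵐ x ∂μ, EventuallyConst {y | (x, y) ∈ S} (ae ν)) :
    ∃ A : Set X, S =ᵐ[μ.prod ν] Prod.fst ⁻¹' A := by
  obtain ⟨T, hT, hST⟩ := hS
  have hTfib : ∀ᵐ x ∂μ, EventuallyConst {y | (x, y) ∈ T} (ae ν) := by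
    filter_upwards [hfib, Measure.ae_ae_of_ae_prod hST] with x hx hSTx using hx.congr hSTx
  obtain ⟨A, hTA⟩ := exists_ae_eq_preimage_fst_of_measurableSet hT hTfib
  exact ⟨A, hST.trans hTA⟩

theorem exists_ae_eq_preimage_snd [SFinite μ] {S : Set (X × Y)}
    (hS : NullMeasurableSet S (μ.prod ν))
    (hfib : ∀ᵐ y ∂ν, EventuallyConst {x | (x, y) ∈ S} (ae μ)) :
    ∃ B : Set Y, S =ᵐ[μ.prod ν] Prod.snd ⁻¹' B := by
  have hswap : NullMeasurableSet (Prod.swap ⁻¹' S) (ν.prod μ) :=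
    hS.preimage Measure.measurePreserving_swap.quasiMeasurePreserving
  obtain ⟨B, hB⟩ := exists_ae_eq_preimage_fst hswap hfib
  exact ⟨B, Measure.measurePreserving_swap.quasiMeasurePreserving.preimage_ae_eq hB⟩

theorem cross_fibering_principle_general [SFinite μ] {S : Set (X × Y)}
    (hS : NullMeasurableSet S (μ.prod ν)) :
    EventuallyConst S (ae (μ.prod ν)) ↔
      (∀ᵐ x ∂μ, EventuallyConst {y | (x, y) ∈ S} (ae ν)) ∧
        ∀ᵐ y ∂ν, EventuallyConst {x | (x, y) ∈ S} (ae μ) := by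
  constructor
  · exact fun h ↦ ⟨ae_eventuallyConst_prodMk_left h, ae_eventuallyConst_prodMk_right h⟩
  · rintro ⟨hX, hY⟩
    obtain ⟨A, hA⟩ := exists_ae_eq_preimage_fst hS hX
    obtain ⟨B, hB⟩ := exists_ae_eq_preimage_snd hS hY
    exact (eventuallyConst_comp_snd_of_comp_fst_ae_eq (hA.symm.trans hB)).congr hB.symm

end Product

/-- The cross fibering principle: for σ-finite measures `μ` on `X` and `ν` on `Y`
and a `μ × ν`-measurable set `S ⊆ X × Y`, the set `S` is `μ × ν`-trivial
(null or co-null) if and only if `μ`-a.e. fiber `S_x` is `ν`-trivial and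
`ν`-a.e. fiber `S^y` is `μ`-trivial. -/
theorem cross_fibering_principle {X Y : Type*} [MeasurableSpace X] [MeasurableSpace Y]
    (μ : Measure X) (ν : Measure Y) [SigmaFinite μ] [SigmaFinite ν]
    (S : Set (X × Y)) (hS : NullMeasurableSet S (μ.prod ν)) :
    ((μ.prod ν) S = 0 ∨ (μ.prod ν) Sᶜ = 0) ↔
      ((∀ᵐ x ∂μ, ν {y | (x, y) ∈ S} = 0 ∨ ν {y | (x, y) ∈ S}ᶜ = 0) ∧
       (∀ᵐ y ∂ν, μ {x | (x, y) ∈ S} = 0 ∨ μ {x | (x, y) ∈ S}ᶜ = 0)) := by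
  simpa only [eventuallyConst_set_ae_iff] using cross_fibering_principle_general hS
end

section
/- Let m, n ≥ 1 and let Ψ : ℤ^m → [0,∞) be a non-negative function. Then the mn-dimensional Lebesgue measure of the linear forms multiplicative set S^×_{m,n}(Ψ) is either 0 or 1. -/
open MeasureTheory Filter

/-- The multiplicative linear forms set `S^×_{m,n}(Ψ)`: the set of
`X ∈ [0,1]^{mn}`, viewed as an `m × n` real matrix, such that
`∏ᵢ |(qX)ᵢ + pᵢ| < Ψ(q)` for infinitely many pairs
`(p, q) ∈ ℤ^n × (ℤ^m \ {0})`. -/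
def SmulLF (m n : ℕ) (Ψ : (Fin m → ℤ) → ℝ) : Set (Fin m → Fin n → ℝ) :=
  {X | (∀ j i, X j i ∈ Set.Icc (0 : ℝ) 1) ∧
    {pq : (Fin n → ℤ) × (Fin m → ℤ) | pq.2 ≠ 0 ∧
      ∏ i, |(∑ j, (pq.2 j : ℝ) * X j i) + (pq.1 i : ℝ)| < Ψ pq.2}.Infinite}

/-!
The question is one about the torus of matrices modulo `1`, where the best choice of `p` turns the
product into `∏ i, ‖(qX) i‖`, with `‖·‖` the distance to the nearest integer. For almost every `X`
no form `(qX) i` with `q ≠ 0` vanishes modulo `1`, so each `q` occurs with finitely many `p` only,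
and infinitely many pairs `(p, q)` amount to infinitely many `q`.

Call the resulting set `S(Ψ)`. Up to a null set, `S(c Ψ)` does not depend on `c > 0`. Indeed,
restrict to those `q` whose largest entry is in row `j`, and vary a single entry `x` of that row:
the condition becomes that `x` lies within a certain distance of the finite set
`{x | q j • x + b = 0}`, and this distance tends to `0` because `|q j| → ∞`. By Cassels' lemma,
scaling the distances by a constant changes the limsup set only by a null set; Fubini's theorem
passes from the circles to the torus.

Doubling `X` maps `S(Ψ)` into `S(2 ^ n Ψ)`, which is `S(Ψ)` up to a null set. Since doubling is
ergodic on the torus, `S(Ψ)` has measure `0` or `1`.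
-/

open Metric Set
open scoped Topology

section LimsupSets

variable {α Q : Type*} [Countable Q]

theorem measurableSet_setOf_frequently_cofinite [MeasurableSpace α] {s : Q → Set α}
    (hs : ∀ q, MeasurableSet (s q)) : MeasurableSet {x | ∃ᶠ q in cofinite, x ∈ s q} := by
  have hinter : {x | ∃ᶠ q in cofinite, x ∈ s q} = ⋂ F : Finset Q, ⋃ q ∉ F, s q := by
    ext x
    simp only [mem_ofPred_eq, mem_iInter, mem_iUnion, exists_prop]
    refine ⟨fun h F ↦ (h.and_eventually F.eventually_cofinite_notMem).exists.imp fun q ↦ And.symm,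
      fun h hfin ↦ ?_⟩
    obtain ⟨q, hq, hx⟩ := h (Set.Finite.toFinset (eventually_cofinite.1 hfin))
    simp_all
  rw [hinter]
  exact .iInter fun F ↦ .iUnion fun q ↦ .iUnion fun _ ↦ hs q

theorem ae_frequently_mem_thickening_const_mul_iff [PseudoMetricSpace α]
    [SecondCountableTopology α] [MeasurableSpace α] [BorelSpace α] (μ : Measure α)
    [IsLocallyFiniteMeasure μ] [IsUnifLocDoublingMeasure μ] (s : Q → Set α)
    {r : Q → ℝ} (hr : Tendsto r cofinite (𝓝 0)) {c : ℝ} (hc : 0 < c) :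
    ∀ᵐ x ∂μ, (∃ᶠ q in cofinite, x ∈ thickening (c * r q) (s q)) ↔
      ∃ᶠ q in cofinite, x ∈ thickening (r q) (s q) := by
  cases finite_or_infinite Q
  · simp [Filter.cofinite_eq_bot]
  obtain ⟨e⟩ := nonempty_equiv_of_countable (α := ℕ) (β := Q)
  have map_e : map e atTop = cofinite := by
    rw [← Nat.cofinite_eq_atTop]
    exact e.injective.tendsto_cofinite.antisymm e.surjective.le_map_cofinite
  have hre : Tendsto (r ∘ e) atTop (𝓝 0) := tendsto_map'_iff.1 (map_e ▸ hr)
  have h := blimsup_thickening_mul_ae_eq μ (fun _ ↦ True) (s ∘ e) hc _ hre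
  filter_upwards [h.mem_iff] with x hx
  simpa only [blimsup_true, mem_limsup_iff_frequently_mem, ← map_e, frequently_map,
    Function.comp_apply] using hx

end LimsupSets

theorem ae_of_forall_ae_add {G β : Type*} [AddGroup G] [MeasurableSpace G]
    [MeasurableAdd₂ G] [MeasurableSpace β] (μ : Measure G) [SFinite μ] [μ.IsAddRightInvariant]
    (ν : Measure β) [SFinite ν] [NeZero ν] {φ : β → G} (hφ : Measurable φ) {p : G → Prop}
    (hp : MeasurableSet {x | p x}) (h : ∀ x, ∀ᵐ t ∂ν, p (x + φ t)) : ∀ᵐ x ∂μ, p x := by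
  have hprod : ∀ᵐ t ∂ν, ∀ᵐ x ∂μ, p (x + φ t) := by
    refine (Measure.ae_ae_comm ?_).1 (.of_forall h)
    exact hp.preimage (measurable_fst.add (hφ.comp measurable_snd))
  obtain ⟨t, ht⟩ := hprod.exists
  filter_upwards [(measurePreserving_sub_right μ (φ t)).quasiMeasurePreserving.ae ht] with x hx
  simpa using hx

theorem thickening_setOf_zsmul_add_eq_zero {T : ℝ} {a : ℤ} (ha : a ≠ 0) (b : AddCircle T)
    (r : ℝ) :
    thickening (r / ‖a‖) {x : AddCircle T | a • x + b = 0} = {x | ‖a • x + b‖ < r} := by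
  have ha' : 0 < ‖a‖ := norm_pos_iff.2 ha
  ext x
  rw [mem_thickening_iff]
  constructor
  · rintro ⟨x', hx', hdist⟩
    calc ‖a • x + b‖ = ‖a • (x - x')‖ := by
          rw [smul_sub, eq_neg_of_add_eq_zero_left hx', sub_neg_eq_add]
      _ ≤ ‖a‖ * ‖x - x'‖ := norm_zsmul_le a _
      _ < r := by rwa [← dist_eq_norm, ← lt_div_iff₀' ha']
  · intro hx
    obtain ⟨v, hv, hvr⟩ := QuotientAddGroup.norm_lt_iff.1 hx
    have hav : a • ((v / a : ℝ) : AddCircle T) = a • x + b := by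
      rw [← AddCircle.coe_zsmul, zsmul_eq_mul, mul_div_cancel₀ _ (Int.cast_ne_zero.2 ha)]
      exact hv
    refine ⟨x - (v / a : ℝ), ?_, ?_⟩
    · rw [mem_ofPred_eq, smul_sub, hav]
      abel
    · rw [dist_eq_norm, sub_sub_cancel]
      calc ‖((v / a : ℝ) : AddCircle T)‖ ≤ ‖v / a‖ := QuotientAddGroup.norm_mk_le_norm
        _ = ‖v‖ / ‖a‖ := by rw [norm_div, Int.norm_cast_real]
        _ < r / ‖a‖ := by gcongr

theorem norm_unitAddCircle_lt_one (x : UnitAddCircle) : ‖x‖ < 1 := by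
  have hx : ‖x‖ ≤ |(1 : ℝ)| / 2 := AddCircle.norm_le_half_period 1 one_ne_zero
  rw [abs_one] at hx
  exact hx.trans_lt one_half_lt_one

section Torsion

theorem dense_iUnion_setOf_pow_nsmul_eq_zero_unitAddCircle {n : ℕ} (hn : 1 < n) :
    Dense (⋃ k : ℕ, {x : UnitAddCircle | n ^ k • x = 0}) := by
  refine Metric.dense_iff.2 fun x ε hε ↦ ?_
  obtain ⟨k, hk⟩ := pow_unbounded_of_one_lt ε⁻¹ (Nat.one_lt_cast.2 hn)
  have hx : x ∈ thickening (1 / ‖(n ^ k : ℤ)‖) {x : UnitAddCircle | (n ^ k : ℤ) • x + 0 = 0} := by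
    rw [thickening_setOf_zsmul_add_eq_zero (by positivity)]
    exact norm_unitAddCircle_lt_one _
  obtain ⟨y, hy, hxy⟩ := mem_thickening_iff.1 hx
  refine ⟨y, ?_, mem_iUnion.2 ⟨k, ?_⟩⟩
  · rw [mem_ball']
    refine hxy.trans ?_
    rw [norm_pow, Int.norm_natCast, one_div]
    exact inv_lt_of_inv_lt₀ hε hk
  · simpa [← natCast_zsmul] using hy

theorem dense_iUnion_setOf_pow_nsmul_eq_zero_pi {ι : Type*} [Finite ι] {G : ι → Type*}
    [∀ i, AddMonoid (G i)] [∀ i, TopologicalSpace (G i)] {n : ℕ}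
    (h : ∀ i, Dense (⋃ k : ℕ, {x : G i | n ^ k • x = 0})) :
    Dense (⋃ k : ℕ, {x : ∀ i, G i | n ^ k • x = 0}) := by
  have hmono (i : ι) : Monotone fun k : ℕ ↦ {x : G i | n ^ k • x = 0} := by
    refine fun k l hkl x (hx : n ^ k • x = 0) ↦ ?_
    obtain ⟨d, rfl⟩ := Nat.exists_eq_add_of_le hkl
    rw [mem_ofPred_eq, pow_add, mul_comm, mul_nsmul', hx, nsmul_zero]
  have hpi : (⋃ k : ℕ, {x : ∀ i, G i | n ^ k • x = 0}) =
      univ.pi fun i ↦ ⋃ k : ℕ, {x : G i | n ^ k • x = 0} := by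
    rw [← iUnion_univ_pi_of_monotone hmono]
    ext x
    simp [funext_iff]
  rw [hpi]
  exact dense_pi univ fun i _ ↦ h i

end Torsion

section Circle

theorem exists_threshold_mul_lt {b c : ℝ} (hb : 0 ≤ b) (hc : 0 < c) (ψ : ℝ) :
    ∃ t ∈ Icc (0 : ℝ) 1, ∀ u ∈ Ico (0 : ℝ) 1,
      (u * b < ψ → u < t) ∧ (u < c * t → u * b < c * ψ) := by
  rcases le_or_gt ψ 0 with hψ | hψ
  · refine ⟨0, by simp, fun u hu ↦ ⟨fun h ↦ ?_, fun h ↦ ?_⟩⟩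
    · linarith [mul_nonneg hu.1 hb]
    · linarith [hu.1]
  rcases hb.eq_or_lt with rfl | hb
  · refine ⟨1, by simp, fun u hu ↦ ⟨fun _ ↦ hu.2, fun _ ↦ ?_⟩⟩
    rw [mul_zero]
    positivity
  · refine ⟨min 1 (ψ / b), ⟨by positivity, min_le_left _ _⟩, fun u hu ↦ ⟨fun h ↦ ?_, fun h ↦ ?_⟩⟩
    · exact lt_min hu.2 ((lt_div_iff₀ hb).2 h)
    · rw [← lt_div_iff₀ hb, mul_div_assoc]
      exact h.trans_le (by gcongr; exact min_le_right _ _)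

theorem ae_frequently_norm_zsmul_add_mul_lt_const_mul {Q : Type*} [Countable Q] {a : Q → ℤ}
    (ha : Tendsto a cofinite cofinite) (y : Q → UnitAddCircle) {b : Q → ℝ} (hb : ∀ q, 0 ≤ b q)
    (ψ : Q → ℝ) {c : ℝ} (hc : 0 < c) :
    ∀ᵐ x : UnitAddCircle, (∃ᶠ q in cofinite, ‖a q • x + y q‖ * b q < ψ q) →
      ∃ᶠ q in cofinite, ‖a q • x + y q‖ * b q < c * ψ q := by
  -- Truncating the thresholds `ψ q / b q` at `1` makes the radii `t q / ‖a q‖` tend to `0`.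
  choose t ht01 ht using fun q ↦ exists_threshold_mul_lt (hb q) hc (ψ q)
  have hnorm : Tendsto (fun q ↦ ‖a q‖) cofinite atTop :=
    (cocompact_eq_cofinite ℤ ▸ tendsto_norm_cocompact_atTop).comp ha
  have hr : Tendsto (fun q ↦ t q / ‖a q‖) cofinite (𝓝 0) := by
    refine squeeze_zero (fun q ↦ div_nonneg (ht01 q).1 (norm_nonneg _)) (fun q ↦ ?_)
      hnorm.inv_tendsto_atTop
    simpa [div_eq_mul_inv] using mul_le_of_le_one_left (by positivity) (ht01 q).2
  have ha0 : ∀ᶠ q in cofinite, a q ≠ 0 := ha.eventually (eventually_cofinite_ne 0)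
  have hmem (z : UnitAddCircle) : ‖z‖ ∈ Ico (0 : ℝ) 1 :=
    ⟨norm_nonneg z, norm_unitAddCircle_lt_one z⟩
  filter_upwards [ae_frequently_mem_thickening_const_mul_iff volume
    (fun q ↦ {x | a q • x + y q = 0}) hr hc] with x hx h
  have hthick : ∃ᶠ q in cofinite, x ∈ thickening (t q / ‖a q‖) {x | a q • x + y q = 0} := by
    refine (h.and_eventually ha0).mono fun q ⟨hq, hq0⟩ ↦ ?_
    rw [thickening_setOf_zsmul_add_eq_zero hq0]
    exact (ht q _ (hmem _)).1 hq
  refine ((hx.2 hthick).and_eventually ha0).mono fun q ⟨hq, hq0⟩ ↦ ?_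
  rw [← mul_div_assoc, thickening_setOf_zsmul_add_eq_zero hq0] at hq
  exact (ht q _ (hmem _)).2 hq

end Circle

section LinearForms

variable {ι κ : Type*} [Fintype ι]

/-- The system of linear forms `X ↦ qX` with integer coefficients `q`, one for each column of the
`ι × κ` matrix `X`; the entries of `X` lie in an arbitrary abelian group, such as `ℝ / ℤ`. -/
def linearForms {A : Type*} [AddCommGroup A] (q : ι → ℤ) : (ι → κ → A) →+ (κ → A) :=
  ∑ j, q j • Pi.evalAddMonoidHom (fun _ ↦ κ → A) j

theorem linearForms_apply {A : Type*} [AddCommGroup A] (q : ι → ℤ) (X : ι → κ → A) (i : κ) :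
    linearForms q X i = ∑ j, q j • X j i := by
  simp [linearForms]

theorem linearForms_single {A : Type*} [AddCommGroup A] [DecidableEq ι] (q : ι → ℤ) (j : ι)
    (v : κ → A) : linearForms q (Pi.single j v) = q j • v := by
  ext i
  rw [linearForms_apply, Finset.sum_eq_single j]
  · simp
  · intro k _ hk
    simp [hk]
  · simp

theorem continuous_linearForms {A : Type*} [AddCommGroup A] [TopologicalSpace A]
    [IsTopologicalAddGroup A] (q : ι → ℤ) :
    Continuous (linearForms q : (ι → κ → A) → κ → A) := by
  refine continuous_pi fun i ↦ ?_
  simp only [linearForms_apply]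
  fun_prop

end LinearForms

section FiniteProducts

theorem norm_coe_le_abs_add_intCast (y : ℝ) (z : ℤ) : ‖(y : UnitAddCircle)‖ ≤ |y + z| := by
  simpa [UnitAddCircle.norm_eq] using round_le y (-z)

theorem exists_norm_apply_eq_norm {ι : Type*} [Fintype ι] [Nonempty ι] {E : ι → Type*}
    [∀ i, SeminormedAddGroup (E i)] (x : ∀ i, E i) : ∃ i, ‖x i‖ = ‖x‖ := by
  obtain ⟨i, hi⟩ := Finite.exists_max fun i ↦ ‖x i‖
  exact ⟨i, (norm_le_pi_norm x i).antisymm ((pi_norm_le_iff_of_nonempty x).2 hi)⟩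

theorem prod_norm_add_single {κ E : Type*} [Fintype κ] [SeminormedAddCommGroup E] [DecidableEq κ]
    (y : κ → E) (i : κ) (z : E) :
    ∏ k, ‖(y + Pi.single i z : κ → E) k‖ = ‖z + y i‖ * ∏ k ∈ Finset.univ.erase i, ‖y k‖ := by
  rw [← Finset.mul_prod_erase _ _ (Finset.mem_univ i)]
  congr 1
  · simp [add_comm]
  · refine Finset.prod_congr rfl fun k hk ↦ ?_
    simp [Finset.ne_of_mem_erase hk]

theorem finite_setOf_prod_abs_add_lt {κ : Type*} [Fintype κ] {y : κ → ℝ}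
    (hy : ∀ i, (y i : UnitAddCircle) ≠ 0) (ψ : ℝ) :
    {p : κ → ℤ | ∏ i, |y i + p i| < ψ}.Finite := by
  classical
  let D : κ → ℝ := fun i ↦ ∏ k ∈ Finset.univ.erase i, ‖(y k : UnitAddCircle)‖
  have hD (i : κ) : 0 < D i := Finset.prod_pos fun k _ ↦ norm_pos_iff.2 (hy k)
  have hfin (i : κ) : {z : ℤ | |y i + z| ≤ ψ / D i}.Finite := by
    refine (Set.finite_Icc ⌈-(ψ / D i) - y i⌉ ⌊ψ / D i - y i⌋).subset fun z hz ↦ ?_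
    obtain ⟨hlower, hupper⟩ := abs_le.1 (mem_ofPred.1 hz)
    exact ⟨Int.ceil_le.2 (by linarith), Int.le_floor.2 (by linarith)⟩
  refine (Set.Finite.pi' hfin).subset fun p hp i ↦ ?_
  rw [mem_ofPred_eq, le_div_iff₀ (hD i)]
  calc |y i + p i| * D i ≤ |y i + p i| * ∏ k ∈ Finset.univ.erase i, |y k + p k| := by
        refine mul_le_mul_of_nonneg_left ?_ (abs_nonneg _)
        exact Finset.prod_le_prod (fun _ _ ↦ norm_nonneg _)
          fun _ _ ↦ norm_coe_le_abs_add_intCast _ _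
    _ = ∏ i, |y i + p i| := Finset.mul_prod_erase _ (fun k ↦ |y k + p k|) (Finset.mem_univ i)
    _ ≤ ψ := le_of_lt hp

theorem exists_prod_abs_add_lt_iff {κ : Type*} [Fintype κ] (y : κ → ℝ) (ψ : ℝ) :
    (∃ p : κ → ℤ, ∏ i, |y i + p i| < ψ) ↔ ∏ i, ‖(y i : UnitAddCircle)‖ < ψ := by
  refine ⟨fun ⟨p, hp⟩ ↦ hp.trans_le' ?_, fun h ↦ ⟨fun i ↦ -round (y i), ?_⟩⟩
  · gcongr
    exact norm_coe_le_abs_add_intCast _ _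
  · simpa [UnitAddCircle.norm_eq, sub_eq_add_neg] using h

end FiniteProducts

section Torus

variable {ι κ : Type*}

instance [Countable ι] [Countable κ] : BorelSpace (ι → κ → UnitAddCircle) := Pi.borelSpace

variable [Fintype ι] [Fintype κ]

instance : (volume : Measure (ι → κ → UnitAddCircle)).IsAddHaarMeasure :=
  Measure.pi.isAddHaarMeasure _

theorem volume_univ_torus : volume (univ : Set (ι → κ → UnitAddCircle)) = 1 := by
  simp [volume_pi, Measure.pi_univ]

theorem ergodic_nsmul_torus {n : ℕ} (hn : 1 < n) :
    Ergodic fun X : ι → κ → UnitAddCircle ↦ n • X := by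
  have hdense : Dense (⋃ k : ℕ, {X : ι → κ → UnitAddCircle | n ^ k • X = 0}) :=
    dense_iUnion_setOf_pow_nsmul_eq_zero_pi fun _ ↦
      dense_iUnion_setOf_pow_nsmul_eq_zero_pi fun _ ↦
        dense_iUnion_setOf_pow_nsmul_eq_zero_unitAddCircle hn
  let f : (ι → κ → UnitAddCircle) →+ (ι → κ → UnitAddCircle) := nsmulAddMonoidHom n
  have hf : ⇑f = (n • ·) := rfl
  refine f.ergodic_of_dense_iUnion_preimage_zero ?_ (continuous_const_smul n) ?_
  · convert! hdense using 3 with k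
    ext X
    simp [hf, smul_iterate]
  · simpa only [Function.Surjective, hf, natCast_zsmul] using
      DivisibleBy.surjective_smul (ι → κ → UnitAddCircle) ℤ (by omega : (n : ℤ) ≠ 0)

/-- The analogue of `SmulLF` on the torus of matrices modulo `1`. The norm on `UnitAddCircle` is the
distance to the nearest integer, so that the best choice of the integer vector `p` is built in, and
the point `q = 0` need not be excluded, as it does not affect the limsup. -/
def multApproxSet (κ : Type*) [Fintype κ] (Ψ : (ι → ℤ) → ℝ) : Set (ι → κ → UnitAddCircle) :=
  {X | ∃ᶠ q in cofinite, ∏ i, ‖linearForms q X i‖ < Ψ q}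

theorem measurableSet_setOf_prod_norm_linearForms_lt (q : ι → ℤ) (ψ : ℝ) :
    MeasurableSet {X : ι → κ → UnitAddCircle | ∏ i, ‖linearForms q X i‖ < ψ} := by
  have hcont := continuous_linearForms (A := UnitAddCircle) (κ := κ) q
  exact (isOpen_lt (by fun_prop) continuous_const).measurableSet

theorem measurableSet_multApproxSet (Ψ : (ι → ℤ) → ℝ) :
    MeasurableSet (multApproxSet κ Ψ) :=
  measurableSet_setOf_frequently_cofinite fun q ↦
    measurableSet_setOf_prod_norm_linearForms_lt q (Ψ q)

theorem tendsto_apply_cofinite_of_norm_apply_eq_norm (j : ι) :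
    Tendsto (fun q : {q : ι → ℤ // ‖q j‖ = ‖q‖} ↦ q.1 j) cofinite cofinite := by
  have hnorm : Tendsto (fun q : ι → ℤ ↦ ‖q‖) cofinite atTop :=
    cocompact_eq_cofinite (ι → ℤ) ▸ tendsto_norm_cocompact_atTop
  rw [← cocompact_eq_cofinite ℤ, ← cobounded_eq_cocompact, ← tendsto_norm_atTop_iff_cobounded]
  refine (hnorm.comp Subtype.val_injective.tendsto_cofinite).congr fun q ↦ q.2.symm

theorem ae_frequently_prod_norm_linearForms_lt_const_mul [Nonempty κ] (Ψ : (ι → ℤ) → ℝ)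
    {c : ℝ} (hc : 0 < c) (j : ι) : ∀ᵐ X : ι → κ → UnitAddCircle,
      (∃ᶠ q : {q : ι → ℤ // ‖q j‖ = ‖q‖} in cofinite, ∏ i, ‖linearForms q.1 X i‖ < Ψ q) →
      ∃ᶠ q : {q : ι → ℤ // ‖q j‖ = ‖q‖} in cofinite, ∏ i, ‖linearForms q.1 X i‖ < c * Ψ q := by
  classical
  obtain ⟨i⟩ := ‹Nonempty κ›
  let φ : UnitAddCircle → ι → κ → UnitAddCircle := fun x ↦ Pi.single j (Pi.single i x)
  have hφ : Measurable φ :=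
    ((continuous_single (A := fun _ : ι ↦ κ → UnitAddCircle) j).comp
      (continuous_single i)).measurable
  have hmeas (f : (ι → ℤ) → ℝ) : MeasurableSet {X : ι → κ → UnitAddCircle |
      ∃ᶠ q : {q : ι → ℤ // ‖q j‖ = ‖q‖} in cofinite, ∏ i, ‖linearForms q.1 X i‖ < f q} :=
    measurableSet_setOf_frequently_cofinite fun q ↦
      measurableSet_setOf_prod_norm_linearForms_lt q.1 (f q)
  refine ae_of_forall_ae_add volume (volume : Measure UnitAddCircle) hφ
    ((hmeas Ψ).imp (hmeas (c * Ψ ·))) fun X ↦ ?_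
  have hline (q : ι → ℤ) (x : UnitAddCircle) : ∏ k, ‖linearForms q (X + φ x) k‖ =
      ‖q j • x + linearForms q X i‖ * ∏ k ∈ Finset.univ.erase i, ‖linearForms q X k‖ := by
    rw [map_add, linearForms_single, ← Pi.single_smul', prod_norm_add_single]
  simp only [hline]
  exact ae_frequently_norm_zsmul_add_mul_lt_const_mul
    (tendsto_apply_cofinite_of_norm_apply_eq_norm j) _ (fun q ↦ by positivity) _ hc

theorem frequently_cofinite_iff_exists_frequently_norm_apply_eq {p : (ι → ℤ) → Prop} :
    (∃ᶠ q in cofinite, p q) ↔ ∃ j, ∃ᶠ q : {q : ι → ℤ // ‖q j‖ = ‖q‖} in cofinite, p q := by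
  have hmax : ∀ᶠ q : ι → ℤ in cofinite, ∃ j, ‖q j‖ = ‖q‖ := by
    filter_upwards [eventually_cofinite_ne 0] with q hq
    obtain ⟨j, -⟩ := Function.ne_iff.1 hq
    have : Nonempty ι := ⟨j⟩
    exact exists_norm_apply_eq_norm q
  simp_rw [← Subtype.val_injective.comap_cofinite_eq, Filter.frequently_comap, ← frequently_exists]
  refine frequently_congr (hmax.mono fun q hq ↦ ?_)
  simpa using fun _ ↦ hq

theorem multApproxSet_ae_le_multApproxSet_const_mul [Nonempty κ] (Ψ : (ι → ℤ) → ℝ) {c : ℝ}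
    (hc : 0 < c) : multApproxSet κ Ψ ≤ᵐ[volume] multApproxSet κ fun q ↦ c * Ψ q := by
  filter_upwards [ae_all_iff.2 (ae_frequently_prod_norm_linearForms_lt_const_mul Ψ hc)]
    with X hX hXmem
  exact frequently_cofinite_iff_exists_frequently_norm_apply_eq.2 <|
    (frequently_cofinite_iff_exists_frequently_norm_apply_eq.1 hXmem).imp hX

theorem nsmul_mem_multApproxSet {n : ℕ} (hn : n ≠ 0) {Ψ : (ι → ℤ) → ℝ}
    {X : ι → κ → UnitAddCircle} (hX : X ∈ multApproxSet κ Ψ) :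
    n • X ∈ multApproxSet κ fun q ↦ n ^ Fintype.card κ * Ψ q := by
  refine hX.mono fun q hq ↦ ?_
  calc ∏ i, ‖linearForms q (n • X) i‖
      ≤ ∏ i, (n * ‖linearForms q X i‖) := by
        simp only [map_nsmul, Pi.smul_apply]
        gcongr
        exact norm_nsmul_le
    _ = n ^ Fintype.card κ * ∏ i, ‖linearForms q X i‖ := by
        rw [Finset.prod_mul_distrib, Finset.prod_const, Finset.card_univ]
    _ < n ^ Fintype.card κ * Ψ q := by gcongr

theorem multApproxSet_ae_eq_empty_or_univ (κ : Type*) [Fintype κ] [Nonempty κ] (Ψ : (ι → ℤ) → ℝ) :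
    multApproxSet κ Ψ =ᵐ[volume] (∅ : Set (ι → κ → UnitAddCircle)) ∨
      multApproxSet κ Ψ =ᵐ[volume] univ := by
  have herg := ergodic_nsmul_torus (ι := ι) (κ := κ) one_lt_two
  refine herg.ae_empty_or_univ_of_ae_le_preimage
    (measurableSet_multApproxSet Ψ).nullMeasurableSet ?_
  have hscale := multApproxSet_ae_le_multApproxSet_const_mul (κ := κ)
    (fun q ↦ (2 : ℕ) ^ Fintype.card κ * Ψ q) (c := ((2 : ℕ) ^ Fintype.card κ)⁻¹) (by positivity)
  filter_upwards [herg.quasiMeasurePreserving.ae hscale] with X hX hXmem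
  have hmem := hX (nsmul_mem_multApproxSet two_ne_zero hXmem)
  simp_rw [inv_mul_cancel_left₀ (by positivity : ((2 : ℕ) : ℝ) ^ Fintype.card κ ≠ 0)] at hmem
  exact hmem

end Torus

section FundamentalCube

theorem volume_singleton_unitAddCircle (x : UnitAddCircle) : volume {x} = 0 := by
  rw [← closedBall_zero, AddCircle.volume_closedBall]
  simp

theorem ae_linearForms_ne_zero {ι κ : Type*} [Fintype ι] [Fintype κ] :
    ∀ᵐ X : ι → κ → UnitAddCircle, ∀ q ≠ 0, ∀ i, linearForms q X i ≠ 0 := by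
  classical
  refine ae_all_iff.2 fun q ↦ eventually_imp_distrib_left.2 fun hq ↦ ae_all_iff.2 fun i ↦ ?_
  let f : (ι → κ → UnitAddCircle) →+ UnitAddCircle :=
    (Pi.evalAddMonoidHom (fun _ ↦ UnitAddCircle) i).comp (linearForms q)
  have hcont : Continuous f := (continuous_apply i).comp (continuous_linearForms q)
  have hsurj : Function.Surjective f := fun y ↦ by
    obtain ⟨j, hj⟩ := Function.ne_iff.1 hq
    obtain ⟨x, rfl⟩ := DivisibleBy.surjective_smul UnitAddCircle ℤ hj y
    exact ⟨Pi.single j fun _ ↦ x, congrFun (linearForms_single q j _) i⟩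
  have hf : MeasurePreserving f := f.measurePreserving hcont hsurj (by simp [volume_univ_torus])
  exact hf.quasiMeasurePreserving.ae
    (measure_eq_zero_iff_ae_notMem.1 (volume_singleton_unitAddCircle 0))

theorem measurePreserving_pi_restrict {ι : Type*} [Fintype ι] {α β : ι → Type*}
    [∀ i, MeasureSpace (α i)] [∀ i, MeasureSpace (β i)]
    [∀ i, SigmaFinite (volume : Measure (α i))] [∀ i, SigmaFinite (volume : Measure (β i))]
    {s : ∀ i, Set (α i)} {f : ∀ i, α i → β i}
    (hf : ∀ i, MeasurePreserving (f i) (volume.restrict (s i))) :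
    MeasurePreserving (fun (x : ∀ i, α i) i ↦ f i (x i)) (volume.restrict (univ.pi s)) := by
  rw [volume_pi, Measure.restrict_pi_pi]
  exact measurePreserving_pi _ _ hf

theorem measurePreserving_coe_unitAddCircle_Icc :
    MeasurePreserving ((↑) : ℝ → UnitAddCircle) (volume.restrict (Icc 0 1)) := by
  rw [← Measure.restrict_congr_set Ioc_ae_eq_Icc]
  simpa using UnitAddCircle.measurePreserving_mk 0

theorem infinite_setOf_rel_iff_frequently_exists {P Q : Type*} {R : P → Q → Prop}
    (hR : ∀ q, {p | R p q}.Finite) :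
    {pq : P × Q | R pq.1 pq.2}.Infinite ↔ ∃ᶠ q in cofinite, ∃ p, R p q := by
  have himage : Prod.snd '' {pq : P × Q | R pq.1 pq.2} = {q | ∃ p, R p q} := by
    ext q
    simp
  rw [frequently_cofinite_iff_infinite, ← himage]
  refine ⟨fun h hfin ↦ h (hfin.of_finite_fibers _ fun q _ ↦ ?_), Infinite.of_image _⟩
  refine ((hR q).image (·, q)).subset ?_
  rintro ⟨p, _⟩ ⟨hp, rfl⟩
  exact ⟨p, hp, rfl⟩

theorem mem_smulLF_iff {m n : ℕ} {Ψ : (Fin m → ℤ) → ℝ} {X : Fin m → Fin n → ℝ}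
    (hX : ∀ q ≠ 0, ∀ i, linearForms q (fun j i ↦ (X j i : UnitAddCircle)) i ≠ 0)
    (hcube : ∀ j i, X j i ∈ Icc (0 : ℝ) 1) :
    X ∈ SmulLF m n Ψ ↔ (fun j i ↦ (X j i : UnitAddCircle)) ∈ multApproxSet (Fin n) Ψ := by
  have hcoe (q : Fin m → ℤ) (i : Fin n) :
      linearForms q (fun j i ↦ (X j i : UnitAddCircle)) i = (∑ j, q j * X j i : ℝ) := by
    simp [linearForms_apply]
  simp only [hcoe] at hX
  have hfin (q : Fin m → ℤ) : {p : Fin n → ℤ |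
      q ≠ 0 ∧ ∏ i, |(∑ j, (q j : ℝ) * X j i) + (p i : ℝ)| < Ψ q}.Finite := by
    by_cases hq : q = 0
    · simp [hq]
    · simpa [hq] using finite_setOf_prod_abs_add_lt (hX q hq) (Ψ q)
  calc X ∈ SmulLF m n Ψ
      ↔ ∃ᶠ q in cofinite, ∃ p : Fin n → ℤ,
          q ≠ 0 ∧ ∏ i, |(∑ j, (q j : ℝ) * X j i) + (p i : ℝ)| < Ψ q :=
        (and_iff_right hcube).trans (infinite_setOf_rel_iff_frequently_exists hfin)
    _ ↔ ∃ᶠ q in cofinite, ∏ i, ‖((∑ j, q j * X j i : ℝ) : UnitAddCircle)‖ < Ψ q := by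
        simp only [exists_and_left, exists_prod_abs_add_lt_iff]
        exact frequently_congr ((eventually_cofinite_ne 0).mono fun q hq ↦ and_iff_right hq)
    _ ↔ (fun j i ↦ (X j i : UnitAddCircle)) ∈ multApproxSet (Fin n) Ψ := by
        simp only [multApproxSet, mem_ofPred_eq, hcoe]

theorem volume_smulLF (m n : ℕ) (Ψ : (Fin m → ℤ) → ℝ) :
    volume (SmulLF m n Ψ) = volume (multApproxSet (Fin n) Ψ) := by
  let cube : Set (Fin m → Fin n → ℝ) := univ.pi fun _ ↦ univ.pi fun _ ↦ Icc 0 1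
  have hcube (X : Fin m → Fin n → ℝ) : X ∈ cube ↔ ∀ j i, X j i ∈ Icc (0 : ℝ) 1 := by
    simp only [cube, mem_univ_pi]
  have hπ : MeasurePreserving (fun (X : Fin m → Fin n → ℝ) j i ↦ (X j i : UnitAddCircle))
      (volume.restrict cube) :=
    measurePreserving_pi_restrict fun _ ↦ measurePreserving_pi_restrict fun _ ↦
      measurePreserving_coe_unitAddCircle_Icc
  have hmeas : MeasurableSet cube :=
    .univ_pi fun _ ↦ .univ_pi fun _ ↦ measurableSet_Icc
  rw [← hπ.measure_preimage (measurableSet_multApproxSet Ψ).nullMeasurableSet,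
    ← Measure.restrict_eq_self volume fun X hX ↦ (hcube X).2 hX.1]
  refine measure_congr (eventuallyEq_set.2 ?_)
  filter_upwards [hπ.quasiMeasurePreserving.ae ae_linearForms_ne_zero,
    ae_restrict_mem hmeas] with X hX hXcube
  exact mem_smulLF_iff hX ((hcube X).1 hXcube)

end FundamentalCube

/-- Zero-one law for the multiplicative linear forms set: for any `m, n ≥ 1`
and any non-negative `Ψ : ℤ^m → [0,∞)`, the `mn`-dimensional Lebesgue measure
of `S^×_{m,n}(Ψ)` is either 0 or 1. -/
theorem linear_forms_zero_one_law_S (m n : ℕ) (hm : 1 ≤ m) (hn : 1 ≤ n)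
    (Ψ : (Fin m → ℤ) → ℝ) (hΨ : ∀ q, 0 ≤ Ψ q) :
    volume (SmulLF m n Ψ) = 0 ∨ volume (SmulLF m n Ψ) = 1 := by
  have : Nonempty (Fin n) := Fin.pos_iff_nonempty.1 hn
  rw [volume_smulLF]
  refine (multApproxSet_ae_eq_empty_or_univ (Fin n) Ψ).imp (fun h ↦ ?_) fun h ↦ ?_
  · rw [measure_congr h, measure_empty]
  · rw [measure_congr h, volume_univ_torus]
end

section
/- Let m, n ≥ 1 and let Ψ : ℤ^m → [0,∞) be a non-negative function. Then the mn-dimensional Lebesgue measure of the linear forms multiplicative set with coprimality D^×_{m,n}(Ψ) is either 0 or 1. -/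
open MeasureTheory Filter

/-- The multiplicative linear forms set with coprimality `D^×_{m,n}(Ψ)`: the set
of `X ∈ [0,1]^{mn}`, viewed as an `m × n` real matrix, such that
`∏ᵢ |(qX)ᵢ + pᵢ| < Ψ(q)` for infinitely many pairs
`(p, q) ∈ ℤ^n × (ℤ^m \ {0})` with `gcd(pᵢ, q) = 1` for all `i`, i.e. `pᵢ`
together with the coordinates of `q` have greatest common divisor 1. -/
def DmulLF (m n : ℕ) (Ψ : (Fin m → ℤ) → ℝ) : Set (Fin m → Fin n → ℝ) :=
  {X | (∀ j i, X j i ∈ Set.Icc (0 : ℝ) 1) ∧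
    {pq : (Fin n → ℤ) × (Fin m → ℤ) | pq.2 ≠ 0 ∧
      (∀ i, Int.gcd (pq.1 i) (Finset.univ.gcd fun j => pq.2 j) = 1) ∧
      ∏ i, |(∑ j, (pq.2 j : ℝ) * X j i) + (pq.1 i : ℝ)| < Ψ pq.2}.Infinite}

/-!
For `q ≠ 0`, the distance from the value at `q` of a linear form `x` to the integers coprime to
`q` is `|q|₁` times the distance, in the torus, from `x` to the union `K q` of the hyperplanes
`q · x + p = 0` with `p` coprime to `q`. Fixing all forms but one thus turns the multiplicative
condition into `x ∈ thickening (ρ q) (K q)` for infinitely many `q`, and the cross-fibering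
principle reduces the zero-one law to the limsup set of these thickenings.

If `ρ` does not tend to `0`, that limsup set is everything, because the gaps between integers
coprime to `d` are `o(d)` and `|q|₁` is at least the gcd of `q`. Otherwise it does not change, up
to a null set, when all radii are multiplied by a constant, and Gallagher's argument applies. Let
`l` be a prime and split the `q` according to the power of `l` dividing them. If `l ∤ q` the map
`x ↦ l x` sends `K q` into itself; if `l ∣ q` but `l² ∤ qᵢ` so does `x ↦ l x + eᵢ / l`; and if
`l² ∣ q` then `K q` is invariant under `l`-torsion. Affine maps with linear part `l` are ergodic,
so each of the first two types of `q` contributes a null or conull set. If, for every prime `l`,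
only null sets arise, then the limsup set is almost invariant under the torsion points of prime
order, which are dense in the torus.
-/

open Metric Topology Function

section LimsupSets

variable {β α : Type*} [Countable β]

theorem measurableSet_setOf_frequently_cofinite_s8 [MeasurableSpace α] {P : β → α → Prop}
    (hP : ∀ b, MeasurableSet {x | P b x}) : MeasurableSet {x | ∃ᶠ b in cofinite, P b x} := by
  have h_eq : {x | ∃ᶠ b in cofinite, P b x} = ⋂ s : Finset β, ⋃ b ∉ s, {x | P b x} := by
    ext x
    simp only [Set.mem_iInter, Set.mem_iUnion, exists_prop]
    rw [Set.mem_ofPred_eq, frequently_cofinite_iff_infinite]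
    refine ⟨fun h s => ?_, fun h h_fin => ?_⟩
    · obtain ⟨b, hb, hbs⟩ := h.exists_notMem_finset s
      exact ⟨b, hbs, hb⟩
    · obtain ⟨b, hbs, hb⟩ := h h_fin.toFinset
      exact hbs (h_fin.mem_toFinset.2 hb)
  rw [h_eq]
  exact .iInter fun s => .iUnion fun b => .iUnion fun _ => hP b

theorem ae_frequently_mem_thickening_mul_iff [PseudoMetricSpace α] [SecondCountableTopology α]
    [MeasurableSpace α] [BorelSpace α] (μ : Measure α) [IsLocallyFiniteMeasure μ]
    [IsUnifLocDoublingMeasure μ] (p : β → Prop) (s : β → Set α) {M : ℝ} (hM : 0 < M)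
    {r : β → ℝ} (hr : Tendsto r cofinite (𝓝 0)) :
    ∀ᵐ x ∂μ, (∃ᶠ b in cofinite, p b ∧ x ∈ thickening (M * r b) (s b)) ↔
      ∃ᶠ b in cofinite, p b ∧ x ∈ thickening (r b) (s b) := by
  rcases finite_or_infinite β with _ | _
  · simp only [Filter.cofinite_eq_bot, frequently_bot, iff_self, eventually_true]
  obtain ⟨e⟩ : Nonempty (ℕ ≃ β) := nonempty_equiv_of_countable
  have h_map (Q : β → Prop) : (∃ᶠ b in cofinite, Q b) ↔ ∃ᶠ n in cofinite, Q (e n) := by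
    rw [← frequently_map (m := e) (P := Q),
      le_antisymm e.injective.tendsto_cofinite e.surjective.le_map_cofinite]
  have h_scale := blimsup_thickening_mul_ae_eq μ (p ∘ e) (s ∘ e) hM (r ∘ e)
    (hr.comp (Nat.cofinite_eq_atTop ▸ e.injective.tendsto_cofinite))
  rw [← Nat.cofinite_eq_atTop, cofinite.blimsup_set_eq, cofinite.blimsup_set_eq] at h_scale
  filter_upwards [h_scale.mem_iff] with x hx
  rw [h_map, h_map, frequently_cofinite_iff_infinite, frequently_cofinite_iff_infinite]
  exact hx

end LimsupSets

section ProductMeasures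

variable {κ : Type*} [Fintype κ]

theorem ae_pi_of_forall_ae_update [DecidableEq κ] {α : κ → Type*} [∀ i, MeasurableSpace (α i)]
    {μ : ∀ i, Measure (α i)} [∀ i, SigmaFinite (μ i)] (i : κ) {P : (∀ i, α i) → Prop}
    (hP : MeasurableSet {x | P x}) (h : ∀ x, ∀ᵐ t ∂μ i, P (update x i t)) :
    ∀ᵐ x ∂Measure.pi μ, P x := by
  have h_ind : Measurable ({x | P x}ᶜ.indicator fun _ => (1 : ENNReal)) :=
    measurable_const.indicator hP.compl
  have h_marginal : (∫⋯∫⁻_{i}, {x | P x}ᶜ.indicator (fun _ => 1) ∂μ) = ∫⋯∫⁻_{i}, 0 ∂μ := by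
    simp only [lmarginal_singleton]
    ext x
    refine lintegral_congr_ae ?_
    filter_upwards [h x] with t ht
    exact Set.indicator_of_notMem (not_not_intro ht) _
  have h_null := lintegral_eq_of_lmarginal_eq {i} h_ind measurable_zero h_marginal
  rw [lintegral_indicator_const hP.compl, one_mul] at h_null
  exact h_null.trans lintegral_zero

theorem ae_mem_iff_piecewise_mem [DecidableEq κ] {α : Type*} [MeasurableSpace α]
    {μ : κ → Measure α} [∀ i, SigmaFinite (μ i)] {F : Set (κ → α)} (hF : MeasurableSet F)
    (h : ∀ x i, ∀ᵐ t ∂(μ i).prod (μ i), update x i t.1 ∈ F ↔ update x i t.2 ∈ F) (s : Finset κ) :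
    ∀ᵐ w ∂Measure.pi fun i => (μ i).prod (μ i),
      (fun i => (w i).1) ∈ F ↔ s.piecewise (fun i => (w i).2) (fun i => (w i).1) ∈ F := by
  have h_meas (s : Finset κ) : Measurable fun w : κ → α × α =>
      s.piecewise (fun i => (w i).2) (fun i => (w i).1) := by
    refine measurable_pi_lambda _ fun i => ?_
    by_cases hi : i ∈ s <;> simp only [Finset.piecewise, hi, if_true, if_false] <;> fun_prop
  induction s using Finset.induction_on with
  | empty => simp
  | insert i s hi ih =>
    have h_step : ∀ᵐ w ∂Measure.pi fun i => (μ i).prod (μ i),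
        s.piecewise (fun i => (w i).2) (fun i => (w i).1) ∈ F ↔
          (insert i s).piecewise (fun i => (w i).2) (fun i => (w i).1) ∈ F := by
      refine ae_pi_of_forall_ae_update i ((h_meas s hF).iff (h_meas _ hF)) fun w => ?_
      filter_upwards [h (s.piecewise (fun i => (w i).2) (fun i => (w i).1)) i] with t ht
      convert ht using 2
      all_goals
        ext j
        rcases eq_or_ne j i with rfl | hj
        · simp [hi]
        · simp [Finset.piecewise, hj]
    filter_upwards [ih, h_step] with w h₁ h₂ using h₁.trans h₂

/-- The cross-fibering principle of Beresnevich, Haynes and Velani. -/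
theorem eventuallyConst_pi_of_forall_update [DecidableEq κ] {α : Type*} [MeasurableSpace α]
    {μ : κ → Measure α} [∀ i, SigmaFinite (μ i)] {F : Set (κ → α)} (hF : MeasurableSet F)
    (h : ∀ x i, EventuallyConst {t | update x i t ∈ F} (ae (μ i))) :
    EventuallyConst F (ae (Measure.pi μ)) := by
  have h_pair (x i) : ∀ᵐ t ∂(μ i).prod (μ i), update x i t.1 ∈ F ↔ update x i t.2 ∈ F := by
    rcases eventuallyConst_set.1 (h x i) with h' | h'
    · filter_upwards [Measure.quasiMeasurePreserving_fst.ae h',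
        Measure.quasiMeasurePreserving_snd.ae h'] with t h₁ h₂ using iff_of_true h₁ h₂
    · filter_upwards [Measure.quasiMeasurePreserving_fst.ae h',
        Measure.quasiMeasurePreserving_snd.ae h'] with t h₁ h₂ using iff_of_false h₁ h₂
  have h_prod : ∀ᵐ xy ∂(Measure.pi μ).prod (Measure.pi μ), xy.1 ∈ F ↔ xy.2 ∈ F := by
    rw [← (measurePreserving_arrowProdEquivProdArrow α α κ μ μ).map_eq,
      (MeasurableEquiv.measurableEmbedding _).ae_map_iff]
    simpa only [Finset.piecewise_univ] using! ae_mem_iff_piecewise_mem hF h_pair Finset.univ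
  have h_null : Measure.pi μ F * Measure.pi μ Fᶜ = 0 := by
    rw [← Measure.prod_prod]
    refine measure_eq_zero_iff_ae_notMem.2 ?_
    filter_upwards [h_prod] with xy h_iff hxy using hxy.2 (h_iff.1 hxy.1)
  rcases mul_eq_zero.1 h_null with h0 | h0
  · exact eventuallyConst_set.2 (.inr (measure_eq_zero_iff_ae_notMem.1 h0))
  · exact eventuallyConst_set.2 (.inl (mem_ae_iff.2 h0))

section Swap

variable {ι α : Type*} [Fintype ι] [MeasurableSpace α]

theorem measurePreserving_curry_symm (μ : ι × κ → Measure α) [∀ ij, SigmaFinite (μ ij)] :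
    MeasurePreserving (MeasurableEquiv.curry ι κ α).symm
      (Measure.pi fun i => Measure.pi fun j => μ (i, j)) (Measure.pi μ) := by
  refine ⟨MeasurableEquiv.measurable _, (Measure.pi_eq fun s _ => ?_).symm⟩
  have h_box : (MeasurableEquiv.curry ι κ α).symm ⁻¹' Set.univ.pi s =
      Set.univ.pi fun i => Set.univ.pi fun j => s (i, j) := by
    ext x
    simp [MeasurableEquiv.coe_curry_symm, Set.mem_pi, Prod.forall]
  rw [MeasurableEquiv.map_apply, h_box]
  simp only [Measure.pi_pi, Fintype.prod_prod_type]

theorem measurePreserving_swap_pi (μ : ι → κ → Measure α) [∀ i j, SigmaFinite (μ i j)] :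
    MeasurePreserving (swap : (ι → κ → α) → κ → ι → α) (Measure.pi fun i => Measure.pi (μ i))
      (Measure.pi fun j => Measure.pi fun i => μ i j) :=
  ((measurePreserving_curry_symm fun ji : κ × ι => μ ji.2 ji.1).symm _).comp <|
    (measurePreserving_piCongrLeft (fun ji : κ × ι => μ ji.2 ji.1) (Equiv.prodComm ι κ)).comp <|
    measurePreserving_curry_symm fun ij : ι × κ => μ ij.1 ij.2

end Swap

end ProductMeasures

theorem exists_mul_infDist_lt_iff_mem_thickening {α : Type*} [PseudoMetricSpace α] [BoundedSpace α]
    {K : Set α} (hK : K.Nonempty) {c : ℝ} (hc : 0 ≤ c) (B : ℝ) :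
    ∃ ρ, 0 ≤ ρ ∧ ∀ z, c * infDist z K < B ↔ z ∈ thickening ρ K := by
  simp only [mem_thickening_iff_infDist_lt hK]
  rcases hc.eq_or_lt with rfl | hc
  · by_cases hB : 0 < B
    · refine ⟨diam (Set.univ : Set α) + 1, add_nonneg diam_nonneg zero_le_one, fun z => ?_⟩
      have h_diam : infDist z K ≤ diam (Set.univ : Set α) := by
        obtain ⟨y, hy⟩ := hK
        exact (infDist_le_dist_of_mem hy).trans
          (dist_le_diam_of_mem (Bornology.IsBounded.all _) trivial trivial)
      exact iff_of_true (by rwa [zero_mul]) (by linarith)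
    · exact ⟨0, le_rfl, fun z => iff_of_false (by rwa [zero_mul]) infDist_nonneg.not_gt⟩
  · refine ⟨max (B / c) 0, le_max_right _ _, fun z => ?_⟩
    rw [lt_max_iff, or_iff_left infDist_nonneg.not_gt, lt_div_iff₀' hc]

section Torus

variable {ι : Type*}

instance isProbabilityMeasure_unitAddCircle :
    IsProbabilityMeasure (volume : Measure UnitAddCircle) := ⟨UnitAddCircle.measure_univ⟩

/-- The projection of `ℝ^ι` onto the torus `(ℝ/ℤ)^ι`. -/
def toUnitAddTorus (x : ι → ℝ) : UnitAddTorus ι := fun j => x j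

theorem toUnitAddTorus_surjective : Surjective (toUnitAddTorus : (ι → ℝ) → UnitAddTorus ι) :=
  Surjective.piMap fun _ => QuotientAddGroup.mk_surjective

theorem continuous_toUnitAddTorus : Continuous (toUnitAddTorus : (ι → ℝ) → UnitAddTorus ι) :=
  continuous_pi fun j => (AddCircle.continuous_mk' 1).comp (continuous_apply j)

theorem dense_setOf_nsmul_eq_zero {S : Set ℕ} (hS : S.Infinite) :
    Dense {v : UnitAddTorus ι | ∃ n ∈ S, n • v = 0} := by
  intro y
  choose x hx hxy using fun j => AddCircle.eq_coe_Ico (y j)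
  obtain rfl : toUnitAddTorus x = y := funext hxy
  let v (n : ℕ) : ι → ℝ := fun j => ⌊x j * n⌋₊ / n
  have h_lim : Tendsto v atTop (𝓝 x) := tendsto_pi_nhds.2 fun j =>
    (tendsto_nat_floor_mul_div_atTop (hx j).1).comp tendsto_natCast_atTop_atTop
  refine mem_closure_of_frequently_of_tendsto ?_ ((continuous_toUnitAddTorus.tendsto x).comp h_lim)
  refine ((Nat.frequently_atTop_iff_infinite.2 hS).and_eventually (eventually_gt_atTop 0)).mono ?_
  rintro n ⟨hn, hn_pos⟩
  refine ⟨n, hn, funext fun j => ?_⟩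
  have hn_ne : (n : ℝ) ≠ 0 := by positivity
  simp only [comp_apply, Pi.smul_apply, toUnitAddTorus, v, ← AddCircle.coe_nsmul, nsmul_eq_mul,
    mul_div_cancel₀ _ hn_ne, Pi.zero_apply]
  exact (AddCircle.coe_eq_zero_iff 1).2 ⟨⌊x j * n⌋₊, by simp⟩

variable [Fintype ι]

theorem ergodic_nsmul_add_const {l : ℕ} (hl : 1 < l) (w : UnitAddTorus ι) :
    Ergodic (fun x : UnitAddTorus ι => l • x + w) := by
  have h_smul : Ergodic (fun x : UnitAddTorus ι => l • x) := by
    have h_div (y : UnitAddTorus ι) : l • DivisibleBy.div y (l : ℤ) = y := by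
      rw [← natCast_zsmul]
      exact DivisibleBy.div_cancel y (by omega)
    refine AddMonoidHom.ergodic_of_dense_iUnion_preimage_zero (μ := volume)
      (nsmulAddMonoidHom l) ?_ (continuous_nsmul l) fun y => ⟨_, h_div y⟩
    refine (dense_setOf_nsmul_eq_zero (Set.infinite_range_of_injective
      (Nat.pow_right_injective hl))).mono ?_
    rintro v ⟨_, ⟨k, rfl⟩, hv⟩
    refine Set.mem_iUnion.2 ⟨k, ?_⟩
    change (l • ·)^[k] v = 0
    rwa [smul_iterate]
  have hl' : (l : ℤ) - 1 ≠ 0 := by omega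
  set u : UnitAddTorus ι := DivisibleBy.div w ((l : ℤ) - 1)
  have h_fix : l • u = w + u := by
    have := DivisibleBy.div_cancel w hl'
    rw [sub_smul, one_smul, sub_eq_iff_eq_add, natCast_zsmul] at this
    exact this
  let e : UnitAddTorus ι ≃ᵐ UnitAddTorus ι := MeasurableEquiv.addLeft u
  have he : MeasurePreserving e volume volume := measurePreserving_add_left volume u
  rw [← he.ergodic_conjugate_iff]
  convert h_smul using 1
  ext1 x
  simp only [e, comp_apply, MeasurableEquiv.coe_addLeft, MeasurableEquiv.symm_addLeft, smul_add,
    smul_neg, h_fix]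
  abel

theorem eventuallyConst_of_ae_nsmul_add_const_mem {l : ℕ} (hl : 1 < l) {w : UnitAddTorus ι}
    {W : Set (UnitAddTorus ι)} (hW : MeasurableSet W)
    (h : ∀ᵐ x, x ∈ W → l • x + w ∈ W) :
    EventuallyConst W (ae volume) :=
  eventuallyConst_set'.2 ((ergodic_nsmul_add_const hl w).ae_empty_or_univ_of_ae_le_preimage
    hW.nullMeasurableSet h)

theorem eventuallyConst_of_dense_translations {W : Set (UnitAddTorus ι)} (hW : MeasurableSet W)
    (h : Dense {v : UnitAddTorus ι | ∀ᵐ x, v + x ∈ W ↔ x ∈ W}) :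
    EventuallyConst W (ae volume) := by
  have : ErgodicVAdd (UnitAddTorus ι) (UnitAddTorus ι) volume := instErgodicVAddOfIsAddLeftInvariant
  refine aeconst_of_dense_setOfPred_preimage_vadd_ae (M := UnitAddTorus ι)
    hW.nullMeasurableSet (h.mono ?_)
  exact fun v (hv : ∀ᵐ x, v + x ∈ W ↔ x ∈ W) => eventuallyEq_set.2 hv

end Torus

section CoprimeGaps

theorem exists_abs_add_one_add_mul_le {e : ℝ} (he : 0 < e) (y : ℝ) :
    ∃ t : ℤ, |y + (1 + e * t)| ≤ e / 2 := by
  refine ⟨-round ((y + 1) / e), ?_⟩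
  have h_eq : y + (1 + e * (-round ((y + 1) / e) : ℤ)) =
      e * ((y + 1) / e - round ((y + 1) / e)) := by
    push_cast
    field_simp
    ring
  rw [h_eq, abs_mul, abs_of_pos he]
  exact (mul_le_mul_of_nonneg_left (abs_sub_round _) he.le).trans_eq (mul_one_div e 2)

-- Modulo the `P`-free part `e` of `d`, two consecutive elements of the class of `1` are not
-- both divisible by `P`.
theorem exists_isCoprime_mul_abs_add_le {P d : ℕ} (hP : P.Prime) (hPd : P ∣ d) (hd : d ≠ 0)
    (y : ℝ) : ∃ p : ℤ, IsCoprime p d ∧ P * |y + p| ≤ 2 * d := by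
  set e := ordCompl[P] d
  have he_pos : 0 < e := Nat.ordCompl_pos P hd
  have hd_eq : P ^ d.factorization P * e = d := Nat.ordProj_mul_ordCompl_eq_self d P
  have h_le : P * e ≤ d := by
    conv_rhs => rw [← hd_eq]
    gcongr
    exact Nat.le_self_pow (hP.factorization_pos_of_dvd hd hPd).ne' P
  have h_coprime (s : ℤ) (hs : ¬(P : ℤ) ∣ 1 + e * s) : IsCoprime (1 + e * s) (d : ℤ) := by
    rw [← hd_eq, Nat.cast_mul, Nat.cast_pow]
    refine .mul_right (.pow_right ?_) (isCoprime_one_left.add_mul_left_left s)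
    exact ((Nat.prime_iff_prime_int.1 hP).coprime_iff_not_dvd.2 hs).symm
  obtain ⟨t, ht⟩ := exists_abs_add_one_add_mul_le (Nat.cast_pos.2 he_pos) y
  obtain ⟨s, hs, hs_abs⟩ : ∃ s : ℤ, ¬(P : ℤ) ∣ 1 + e * s ∧ |y + (1 + e * s)| ≤ 2 * e := by
    by_cases h_dvd : (P : ℤ) ∣ 1 + e * t
    · refine ⟨t + 1, fun h => ?_, ?_⟩
      · have h_sub := dvd_sub h h_dvd
        rw [add_sub_add_left_eq_sub, mul_add_one, add_sub_cancel_left, Int.natCast_dvd_natCast]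
          at h_sub
        exact Nat.not_dvd_ordCompl hP hd h_sub
      · push_cast
        rw [abs_le] at ht ⊢
        constructor <;> linarith
    · exact ⟨t, h_dvd, by linarith [he_pos.le]⟩
  refine ⟨1 + e * s, h_coprime s hs, ?_⟩
  push_cast
  calc (P : ℝ) * |y + (1 + e * s)| ≤ P * (2 * e) := by gcongr
    _ = 2 * (P * e : ℕ) := by push_cast; ring
    _ ≤ 2 * d := by gcongr

theorem exists_isCoprime_abs_add_le_factorial {N d : ℕ} (h : ∀ P : ℕ, P.Prime → P ∣ d → P ≤ N)
    (y : ℝ) : ∃ p : ℤ, IsCoprime p d ∧ |y + p| ≤ N.factorial := by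
  obtain ⟨t, ht⟩ := exists_abs_add_one_add_mul_le (Nat.cast_pos.2 N.factorial_pos) y
  refine ⟨1 + N.factorial * t, ?_, ?_⟩
  · rw [Int.isCoprime_iff_gcd_eq_one]
    refine Nat.coprime_of_dvd fun P hP h_dvd hPd => hP.not_dvd_one ?_
    have hP_fact : (P : ℤ) ∣ N.factorial := by exact_mod_cast Nat.dvd_factorial hP.pos (h P hP hPd)
    rw [← Int.natCast_dvd, Int.dvd_add_left (hP_fact.mul_right t)] at h_dvd
    exact_mod_cast h_dvd
  · push_cast
    linarith

/-- A sublinear bound for the Jacobsthal function. -/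
theorem exists_forall_exists_isCoprime_abs_add_le {ε : ℝ} (hε : 0 < ε) :
    ∃ C : ℝ, ∀ d : ℕ, d ≠ 0 → ∀ y : ℝ, ∃ p : ℤ, IsCoprime p d ∧ |y + p| ≤ ε * d + C := by
  obtain ⟨N, hN⟩ := exists_nat_gt (2 / ε)
  refine ⟨N.factorial, fun d hd y => ?_⟩
  by_cases h : ∃ P : ℕ, P.Prime ∧ P ∣ d ∧ N < P
  · obtain ⟨P, hP, hPd, hNP⟩ := h
    obtain ⟨p, hp, hp_abs⟩ := exists_isCoprime_mul_abs_add_le hP hPd hd y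
    refine ⟨p, hp, ?_⟩
    have hP_pos : (0 : ℝ) < P := Nat.cast_pos.2 hP.pos
    have hεP : 2 ≤ ε * P := by
      rw [mul_comm, ← div_le_iff₀ hε]
      exact hN.le.trans (Nat.cast_le.2 hNP.le)
    have h_le : |y + p| ≤ ε * d := by
      refine le_of_mul_le_mul_left (hp_abs.trans ?_) hP_pos
      calc (2 : ℝ) * d ≤ ε * P * d := by gcongr
        _ = P * (ε * d) := by ring
    exact h_le.trans (le_add_of_nonneg_right (Nat.cast_nonneg _))
  · push Not at h
    obtain ⟨p, hp, hp_abs⟩ := exists_isCoprime_abs_add_le_factorial h y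
    exact ⟨p, hp, hp_abs.trans (le_add_of_nonneg_left (by positivity))⟩

end CoprimeGaps

theorem tendsto_abs_add_intCast_cofinite (y : ℝ) :
    Tendsto (fun p : ℤ => |y + p|) cofinite atTop :=
  tendsto_norm_cocompact_atTop.comp
    ((Homeomorph.addLeft y).isClosedEmbedding.tendsto_cocompact.comp Int.tendsto_coe_cofinite)

section PrimitiveZeros

variable {ι : Type*} [Fintype ι]

/-- The `ℓ¹`-norm of an integer vector. -/
def l1Norm (q : ι → ℤ) : ℝ := ∑ j, |(q j : ℝ)|

/-- The image in the torus of the hyperplanes `q · x + p = 0` with `p` coprime to `q`, where `q` is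
represented by the greatest common divisor of its coordinates. -/
def primitiveZeros (q : ι → ℤ) : Set (UnitAddTorus ι) :=
  toUnitAddTorus '' {x | ∃ p : ℤ, IsCoprime p (Finset.univ.gcd q) ∧ ∑ j, (q j : ℝ) * x j + p = 0}

variable {q : ι → ℤ}

theorem abs_le_l1Norm (q : ι → ℤ) (j : ι) : |(q j : ℝ)| ≤ l1Norm q :=
  Finset.single_le_sum (f := fun j => |(q j : ℝ)|) (fun _ _ => abs_nonneg _) (Finset.mem_univ j)

theorem l1Norm_nonneg (q : ι → ℤ) : 0 ≤ l1Norm q :=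
  Finset.sum_nonneg fun _ _ => abs_nonneg _

theorem l1Norm_pos (hq : q ≠ 0) : 0 < l1Norm q := by
  obtain ⟨j, hj⟩ := ne_iff.1 hq
  exact (abs_pos.2 (Int.cast_ne_zero.2 hj)).trans_le (abs_le_l1Norm q j)

theorem tendsto_l1Norm_cofinite : Tendsto (l1Norm : (ι → ℤ) → ℝ) cofinite atTop := by
  refine tendsto_atTop.2 fun B => eventually_cofinite.2 ?_
  refine (Set.Finite.pi' fun _ : ι => Set.finite_Icc (-⌈B⌉) ⌈B⌉).subset fun q hq j => ?_
  have h_abs : |(q j : ℝ)| ≤ (⌈B⌉ : ℤ) :=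
    ((abs_le_l1Norm q j).trans (not_le.1 hq).le).trans (Int.le_ceil B)
  rw [abs_le] at h_abs
  exact ⟨by exact_mod_cast h_abs.1, by exact_mod_cast h_abs.2⟩

theorem gcd_ne_zero_of_ne_zero (hq : q ≠ 0) : Finset.univ.gcd q ≠ 0 := fun h =>
  hq (funext fun j => Finset.gcd_eq_zero_iff.1 h j (Finset.mem_univ j))

theorem natAbs_gcd_le_l1Norm (hq : q ≠ 0) : ((Finset.univ.gcd q).natAbs : ℝ) ≤ l1Norm q := by
  obtain ⟨j, hj⟩ := ne_iff.1 hq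
  refine le_trans ?_ (abs_le_l1Norm q j)
  rw [← Int.cast_abs, ← Int.natCast_natAbs (q j), Int.cast_natCast, Nat.cast_le]
  exact Nat.le_of_dvd (Int.natAbs_pos.2 hj)
    (Int.natAbs_dvd_natAbs.2 (Finset.gcd_dvd (Finset.mem_univ j)))

theorem exists_mem_primitiveZeros_mul_dist_le (hq : q ≠ 0) {p : ℤ}
    (hp : IsCoprime p (Finset.univ.gcd q)) (x : ι → ℝ) :
    ∃ y ∈ primitiveZeros q,
      l1Norm q * dist (toUnitAddTorus x) y ≤ |∑ j, (q j : ℝ) * x j + p| := by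
  have hN := l1Norm_pos hq
  set t : ℝ := ∑ j, (q j : ℝ) * x j + p with ht
  refine ⟨toUnitAddTorus fun j => x j - t / l1Norm q * SignType.sign (q j : ℝ),
    ⟨_, ⟨p, hp, ?_⟩, rfl⟩, ?_⟩
  · have h_sum : ∑ j, (q j : ℝ) * (t / l1Norm q * SignType.sign (q j : ℝ)) = t := by
      simp_rw [mul_left_comm _ (t / l1Norm q), ← Finset.mul_sum, self_mul_sign]
      exact div_mul_cancel₀ t hN.ne'
    simp_rw [mul_sub, Finset.sum_sub_distrib, h_sum]
    rw [ht]
    ring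
  · rw [← le_div_iff₀' hN, dist_pi_le_iff (by positivity)]
    intro j
    rw [dist_eq_norm]
    simp only [toUnitAddTorus, ← AddCircle.coe_sub, sub_sub_cancel]
    refine QuotientAddGroup.norm_mk_le_norm.trans ?_
    rw [Real.norm_eq_abs, abs_mul, abs_div, abs_of_pos hN]
    refine mul_le_of_le_one_right (by positivity) ?_
    rcases SignType.sign (q j : ℝ) <;> simp

theorem primitiveZeros_nonempty (hq : q ≠ 0) : (primitiveZeros q).Nonempty :=
  let ⟨y, hy, _⟩ := exists_mem_primitiveZeros_mul_dist_le hq isCoprime_one_left 0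
  ⟨y, hy⟩

theorem l1Norm_mul_infDist_primitiveZeros_le (hq : q ≠ 0) {p : ℤ}
    (hp : IsCoprime p (Finset.univ.gcd q)) (x : ι → ℝ) :
    l1Norm q * infDist (toUnitAddTorus x) (primitiveZeros q) ≤ |∑ j, (q j : ℝ) * x j + p| := by
  obtain ⟨y, hy, h_dist⟩ := exists_mem_primitiveZeros_mul_dist_le hq hp x
  exact (mul_le_mul_of_nonneg_left (infDist_le_dist_of_mem hy) (l1Norm_nonneg q)).trans h_dist

theorem exists_isCoprime_abs_le_l1Norm_mul_dist {y : UnitAddTorus ι} (hy : y ∈ primitiveZeros q)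
    (x : ι → ℝ) : ∃ p : ℤ, IsCoprime p (Finset.univ.gcd q) ∧
      |∑ j, (q j : ℝ) * x j + p| ≤ l1Norm q * dist (toUnitAddTorus x) y := by
  obtain ⟨z, ⟨p, hp, hz⟩, rfl⟩ := hy
  have h_dvd : Finset.univ.gcd q ∣ ∑ j, q j * round (x j - z j) :=
    Finset.dvd_sum fun j hj => (Finset.gcd_dvd hj).mul_right _
  obtain ⟨b, hb⟩ := h_dvd
  refine ⟨p - ∑ j, q j * round (x j - z j), ?_, ?_⟩
  · rw [hb, sub_eq_add_neg, ← mul_neg]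
    exact hp.add_mul_left_left _
  · have h_eq : ∑ j, (q j : ℝ) * x j + (p - ∑ j, q j * round (x j - z j) : ℤ) =
        ∑ j, (q j : ℝ) * (x j - z j - round (x j - z j)) := by
      simp only [mul_sub, Finset.sum_sub_distrib]
      push_cast
      linear_combination hz
    rw [h_eq, l1Norm, Finset.sum_mul]
    refine (Finset.abs_sum_le_sum_abs _ _).trans (Finset.sum_le_sum fun j _ => ?_)
    rw [abs_mul, ← UnitAddCircle.norm_eq, AddCircle.coe_sub, ← dist_eq_norm]
    gcongr
    exact dist_le_pi_dist (toUnitAddTorus x) (toUnitAddTorus z) j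

theorem exists_isCoprime_abs_le_l1Norm_mul_infDist (hq : q ≠ 0) (x : ι → ℝ) :
    ∃ p : ℤ, IsCoprime p (Finset.univ.gcd q) ∧
      |∑ j, (q j : ℝ) * x j + p| ≤ l1Norm q * infDist (toUnitAddTorus x) (primitiveZeros q) := by
  obtain ⟨p, hp, h_min⟩ := (tendsto_abs_add_intCast_cofinite _).exists_within_forall_le
    (s := {p : ℤ | IsCoprime p (Finset.univ.gcd q)}) ⟨1, isCoprime_one_left⟩
  refine ⟨p, hp, ?_⟩
  rw [← div_le_iff₀' (l1Norm_pos hq), le_infDist (primitiveZeros_nonempty hq)]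
  intro y hy
  obtain ⟨p', hp', h_dist⟩ := exists_isCoprime_abs_le_l1Norm_mul_dist hy x
  exact (div_le_iff₀' (l1Norm_pos hq)).2 ((h_min p' hp').trans h_dist)

theorem eventually_thickening_primitiveZeros_eq_univ {ε : ℝ} (hε : 0 < ε) :
    ∀ᶠ q : ι → ℤ in cofinite, thickening ε (primitiveZeros q) = Set.univ := by
  obtain ⟨C, hC⟩ := exists_forall_exists_isCoprime_abs_add_le (half_pos hε)
  filter_upwards [tendsto_l1Norm_cofinite.eventually_gt_atTop (C / (ε / 2)),
    (Set.finite_singleton 0).eventually_cofinite_notMem] with q hqC (hq : q ≠ 0)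
  refine Set.eq_univ_of_forall fun y => ?_
  obtain ⟨x, rfl⟩ := toUnitAddTorus_surjective y
  obtain ⟨p, hp, hp_abs⟩ := hC _ (Int.natAbs_ne_zero.2 (gcd_ne_zero_of_ne_zero hq))
    (∑ j, (q j : ℝ) * x j)
  rw [Int.natCast_natAbs, IsCoprime.abs_right_iff] at hp
  rw [mem_thickening_iff_infDist_lt (primitiveZeros_nonempty hq)]
  refine lt_of_mul_lt_mul_left ?_ (l1Norm_nonneg q)
  calc l1Norm q * infDist (toUnitAddTorus x) (primitiveZeros q)
      ≤ |∑ j, (q j : ℝ) * x j + p| := l1Norm_mul_infDist_primitiveZeros_le hq hp x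
    _ ≤ ε / 2 * (Finset.univ.gcd q).natAbs + C := hp_abs
    _ ≤ ε / 2 * l1Norm q + C := by gcongr; exact natAbs_gcd_le_l1Norm hq
    _ < ε / 2 * l1Norm q + ε / 2 * l1Norm q := by gcongr; rwa [← div_lt_iff₀' (half_pos hε)]
    _ = l1Norm q * ε := by ring

end PrimitiveZeros

theorem nsmul_add_mem_thickening {E : Type*} [SeminormedAddCommGroup E] {K : Set E} {l : ℕ}
    (hl : 0 < l) {w : E} (hK : ∀ y ∈ K, l • y + w ∈ K) {r : ℝ} {x : E} (hx : x ∈ thickening r K) :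
    l • x + w ∈ thickening (l * r) K := by
  obtain ⟨y, hy, hxy⟩ := mem_thickening_iff.1 hx
  refine mem_thickening_iff.2 ⟨_, hK y hy, ?_⟩
  rw [dist_add_right, dist_eq_norm, ← smul_sub]
  refine norm_nsmul_le.trans_lt ?_
  rw [← dist_eq_norm]
  gcongr

theorem isCoprime_mul_sub_of_not_dvd {l a e p : ℤ} (hl : Prime l) (hla : ¬l ∣ a) (hea : e ∣ a)
    (hp : IsCoprime p (l * e)) : IsCoprime (l * p - a) (l * e) := by
  refine .mul_right ?_ ?_
  · rw [sub_eq_neg_add]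
    exact (hl.coprime_iff_not_dvd.2 hla).symm.neg_left.add_mul_left_left p
  · obtain ⟨b, rfl⟩ := hea
    rw [sub_eq_add_neg, ← mul_neg]
    refine .add_mul_left_left (.mul_left ?_ hp.of_mul_right_right) _
    exact hl.coprime_iff_not_dvd.2 fun h => hla (h.mul_right b)

section Gallagher

variable {ι : Type*} [Fintype ι] {q : ι → ℤ} {l : ℕ}

theorem nsmul_mem_primitiveZeros (hl : l.Prime) (hlq : ¬(l : ℤ) ∣ Finset.univ.gcd q)
    {x : UnitAddTorus ι} (hx : x ∈ primitiveZeros q) : l • x ∈ primitiveZeros q := by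
  obtain ⟨x, ⟨p, hp, hxp⟩, rfl⟩ := hx
  refine ⟨l • x, ⟨l * p, ?_, ?_⟩, rfl⟩
  · exact ((Nat.prime_iff_prime_int.1 hl).coprime_iff_not_dvd.2 hlq).mul_left hp
  · simp only [Pi.smul_apply, nsmul_eq_mul, mul_left_comm _ (l : ℝ), ← Finset.mul_sum]
    push_cast
    rw [← mul_add, hxp, mul_zero]

theorem nsmul_add_single_mem_primitiveZeros [DecidableEq ι] (hl : l.Prime)
    (hlq : (l : ℤ) ∣ Finset.univ.gcd q) {i : ι} (hi : ¬(l * l : ℤ) ∣ q i)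
    {x : UnitAddTorus ι} (hx : x ∈ primitiveZeros q) :
    l • x + toUnitAddTorus (Pi.single i (l : ℝ)⁻¹) ∈ primitiveZeros q := by
  obtain ⟨x, ⟨p, hp, hxp⟩, rfl⟩ := hx
  obtain ⟨e, he⟩ := hlq
  have h_dvd : l * e ∣ q i := he ▸ Finset.gcd_dvd (Finset.mem_univ i)
  obtain ⟨a, ha⟩ := (dvd_mul_right (l : ℤ) e).trans h_dvd
  have hl0 : (l : ℤ) ≠ 0 := Nat.cast_ne_zero.2 hl.ne_zero
  rw [ha] at hi h_dvd
  refine ⟨l • x + Pi.single i (l : ℝ)⁻¹, ⟨l * p - a, ?_, ?_⟩, rfl⟩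
  · rw [he] at hp ⊢
    exact isCoprime_mul_sub_of_not_dvd (Nat.prime_iff_prime_int.1 hl)
      (fun h => hi (mul_dvd_mul_left _ h)) ((mul_dvd_mul_iff_left hl0).1 h_dvd) hp
  · have h_single : ∑ j, (q j : ℝ) * (Pi.single i (l : ℝ)⁻¹ : ι → ℝ) j = a := by
      rw [Fintype.sum_eq_single i fun j hj => by rw [Pi.single_eq_of_ne hj, mul_zero],
        Pi.single_eq_same, ha]
      push_cast
      rw [mul_right_comm, mul_inv_cancel₀ (Nat.cast_ne_zero.2 hl.ne_zero), one_mul]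
    simp only [Pi.add_apply, Pi.smul_apply, mul_add, Finset.sum_add_distrib, h_single]
    simp only [nsmul_eq_mul, mul_left_comm _ (l : ℝ), ← Finset.mul_sum]
    push_cast
    linear_combination (l : ℝ) * hxp

theorem add_mem_primitiveZeros (hlq : (l * l : ℤ) ∣ Finset.univ.gcd q) {v x : UnitAddTorus ι}
    (hv : l • v = 0) (hx : x ∈ primitiveZeros q) : v + x ∈ primitiveZeros q := by
  obtain ⟨x, ⟨p, hp, hxp⟩, rfl⟩ := hx
  obtain ⟨u, rfl⟩ := toUnitAddTorus_surjective v
  have h_int (j : ι) : ∃ k : ℤ, (k : ℝ) = l * u j := by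
    obtain ⟨k, hk⟩ := (AddCircle.coe_eq_zero_iff (1 : ℝ)).1 (congrFun hv j)
    exact ⟨k, by simpa using hk⟩
  choose k hk using h_int
  obtain ⟨e, he⟩ := hlq
  have h_dvd (j : ι) : ∃ a, q j = l * l * e * a := he ▸ Finset.gcd_dvd (Finset.mem_univ j)
  choose a ha using h_dvd
  refine ⟨u + x, ⟨p + l * e * -∑ j, a j * k j, ?_, ?_⟩, rfl⟩
  · rw [he, mul_assoc (l : ℤ) l e] at hp ⊢
    have h_coprime := hp.of_mul_right_right.add_mul_left_left (-∑ j, a j * k j)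
    exact h_coprime.of_mul_right_left.mul_right h_coprime
  · have h_shift : ∑ j, (q j : ℝ) * u j = l * e * ∑ j, a j * k j := by
      rw [Int.cast_sum, Finset.mul_sum]
      refine Finset.sum_congr rfl fun j _ => ?_
      push_cast [ha, hk]
      ring
    simp only [Pi.add_apply, mul_add, Finset.sum_add_distrib, h_shift]
    push_cast
    linear_combination hxp

/-- The points lying, for infinitely many `q ∈ G`, within `ρ q` of `primitiveZeros q`. -/
def limsupStrips (ρ : (ι → ℤ) → ℝ) (G : Set (ι → ℤ)) : Set (UnitAddTorus ι) :=
  {x | ∃ᶠ q in cofinite, q ∈ G ∧ x ∈ thickening (ρ q) (primitiveZeros q)}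

variable {ρ : (ι → ℤ) → ℝ} {G : Set (ι → ℤ)}

theorem measurableSet_limsupStrips : MeasurableSet (limsupStrips ρ G) :=
  measurableSet_setOf_frequently_cofinite_s8 fun _ =>
    (MeasurableSet.const _).inter isOpen_thickening.measurableSet

theorem limsupStrips_mono (G : Set (ι → ℤ)) : limsupStrips ρ G ⊆ limsupStrips ρ Set.univ :=
  fun _ hx => hx.mono fun _ hq => ⟨trivial, hq.2⟩

theorem eventuallyConst_limsupStrips_of_nsmul_add_mem (hl : 1 < l) {w : UnitAddTorus ι}
    (hG : ∀ q ∈ G, ∀ x ∈ primitiveZeros q, l • x + w ∈ primitiveZeros q)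
    (hρ : Tendsto ρ cofinite (𝓝 0)) : EventuallyConst (limsupStrips ρ G) (ae volume) := by
  have hl_pos : 0 < l := zero_lt_one.trans hl
  refine eventuallyConst_of_ae_nsmul_add_const_mem hl measurableSet_limsupStrips (w := w) ?_
  filter_upwards [(ergodic_nsmul_add_const hl w).quasiMeasurePreserving.ae
    (ae_frequently_mem_thickening_mul_iff volume (· ∈ G) primitiveZeros
      (Nat.cast_pos.2 hl_pos) hρ)] with x h_scale hx
  refine h_scale.1 (hx.mono ?_)
  rintro q ⟨hq, hxq⟩
  exact ⟨hq, nsmul_add_mem_thickening hl_pos (hG q hq) hxq⟩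

theorem add_mem_limsupStrips_iff (hG : ∀ q ∈ G, (l * l : ℤ) ∣ Finset.univ.gcd q)
    {v : UnitAddTorus ι} (hv : l • v = 0) (x : UnitAddTorus ι) :
    v + x ∈ limsupStrips ρ G ↔ x ∈ limsupStrips ρ G := by
  have h_add {v : UnitAddTorus ι} (hv : l • v = 0) {x : UnitAddTorus ι}
      (hx : x ∈ limsupStrips ρ G) : v + x ∈ limsupStrips ρ G := by
    refine hx.mono ?_
    rintro q ⟨hq, hxq⟩
    have h_inv : ∀ y ∈ primitiveZeros q, 1 • y + v ∈ primitiveZeros q := fun y hy => by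
      rw [one_smul, add_comm]
      exact add_mem_primitiveZeros (hG q hq) hv hy
    refine ⟨hq, ?_⟩
    simpa only [one_smul, Nat.cast_one, one_mul, add_comm x v]
      using nsmul_add_mem_thickening one_pos h_inv hxq
  refine ⟨fun hx => ?_, h_add hv⟩
  rw [← neg_add_cancel_left v x]
  exact h_add (by rw [smul_neg, hv, neg_zero]) hx

theorem mem_limsupStrips_univ_iff (l : ℕ) {x : UnitAddTorus ι}
    (hA : x ∉ limsupStrips ρ {q | ¬(l : ℤ) ∣ Finset.univ.gcd q})
    (hB : ∀ i, x ∉ limsupStrips ρ {q | (l : ℤ) ∣ Finset.univ.gcd q ∧ ¬(l * l : ℤ) ∣ q i}) :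
    x ∈ limsupStrips ρ Set.univ ↔ x ∈ limsupStrips ρ {q | (l * l : ℤ) ∣ Finset.univ.gcd q} := by
  refine ⟨fun hx => ?_, fun hx => limsupStrips_mono _ hx⟩
  refine ((hx.and_eventually (not_frequently.1 hA)).and_eventually
    (eventually_all.2 fun i => not_frequently.1 (hB i))).mono ?_
  rintro q ⟨⟨⟨-, hxq⟩, hqA⟩, hqB⟩
  have hlq : (l : ℤ) ∣ Finset.univ.gcd q := not_not.1 fun h => hqA ⟨h, hxq⟩
  exact ⟨Finset.dvd_gcd fun i _ => not_not.1 fun h => hqB i ⟨⟨hlq, h⟩, hxq⟩, hxq⟩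

theorem ae_mem_limsupStrips_or_forall_ae_add_mem_iff (hρ : Tendsto ρ cofinite (𝓝 0))
    (hl : l.Prime) :
    (∀ᵐ x, x ∈ limsupStrips ρ Set.univ) ∨
      ∀ v : UnitAddTorus ι, l • v = 0 →
        ∀ᵐ x, v + x ∈ limsupStrips ρ Set.univ ↔ x ∈ limsupStrips ρ Set.univ := by
  classical
  refine or_iff_not_imp_left.2 fun h_not_full v hv => ?_
  have h_null {G : Set (ι → ℤ)} (hG : EventuallyConst (limsupStrips ρ G) (ae volume)) :
      ∀ᵐ x, x ∉ limsupStrips ρ G :=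
    (eventuallyConst_set.1 hG).resolve_left fun h =>
      h_not_full (h.mono fun _ hx => limsupStrips_mono G hx)
  have hA : ∀ᵐ x, x ∉ limsupStrips ρ {q : ι → ℤ | ¬(l : ℤ) ∣ Finset.univ.gcd q} :=
    h_null (eventuallyConst_limsupStrips_of_nsmul_add_mem hl.one_lt (w := 0)
      (fun q hq x hx => by rw [add_zero]; exact nsmul_mem_primitiveZeros hl hq hx) hρ)
  have hB : ∀ᵐ x, ∀ i, x ∉ limsupStrips ρ
      {q : ι → ℤ | (l : ℤ) ∣ Finset.univ.gcd q ∧ ¬(l * l : ℤ) ∣ q i} :=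
    ae_all_iff.2 fun i => h_null (eventuallyConst_limsupStrips_of_nsmul_add_mem hl.one_lt
      (fun q hq x hx => nsmul_add_single_mem_primitiveZeros hl hq.1 hq.2 hx) hρ)
  have h_translate := (measurePreserving_add_left volume v).quasiMeasurePreserving
  filter_upwards [hA, hB, h_translate.ae hA, h_translate.ae hB] with x hxA hxB hvA hvB
  rw [mem_limsupStrips_univ_iff l hvA hvB, mem_limsupStrips_univ_iff l hxA hxB]
  exact add_mem_limsupStrips_iff (fun _ hq => hq) hv x

theorem eventuallyConst_limsupStrips_of_tendsto (hρ : Tendsto ρ cofinite (𝓝 0)) :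
    EventuallyConst (limsupStrips ρ Set.univ) (ae volume) := by
  by_cases h_full : ∀ᵐ x, x ∈ limsupStrips ρ Set.univ
  · exact eventuallyConst_set.2 (.inl h_full)
  · refine eventuallyConst_of_dense_translations measurableSet_limsupStrips
      ((dense_setOf_nsmul_eq_zero Nat.infinite_setOfPred_prime).mono ?_)
    rintro v ⟨l, hl, hv⟩
    exact (ae_mem_limsupStrips_or_forall_ae_add_mem_iff hρ hl).resolve_left h_full v hv

theorem eventuallyConst_limsupStrips (hρ : ∀ q, 0 ≤ ρ q) :
    EventuallyConst (limsupStrips ρ Set.univ) (ae volume) := by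
  by_cases h_lim : Tendsto ρ cofinite (𝓝 0)
  · exact eventuallyConst_limsupStrips_of_tendsto h_lim
  · obtain ⟨ε, hε, h_freq⟩ : ∃ ε > 0, ∃ᶠ q in cofinite, ε ≤ ρ q := by
      rw [Metric.tendsto_nhds] at h_lim
      push Not at h_lim
      simpa only [Real.dist_0_eq_abs, abs_of_nonneg (hρ _)] using! h_lim
    refine eventuallyConst_set.2 (.inl (ae_of_all _ fun x => ?_))
    refine (h_freq.and_eventually (eventually_thickening_primitiveZeros_eq_univ hε)).mono ?_
    rintro q ⟨hεq, h_univ⟩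
    exact ⟨trivial, thickening_mono hεq _ (h_univ ▸ trivial)⟩

theorem eventuallyConst_setOf_frequently_mul_infDist_lt {c : (ι → ℤ) → ℝ} (hc : ∀ q, 0 ≤ c q)
    (B : (ι → ℤ) → ℝ) :
    EventuallyConst {x | ∃ᶠ q in cofinite, c q * infDist x (primitiveZeros q) < B q}
      (ae (volume : Measure (UnitAddTorus ι))) := by
  have h_radius (q : ι → ℤ) : ∃ ρ, 0 ≤ ρ ∧
      (q ≠ 0 → ∀ x, c q * infDist x (primitiveZeros q) < B q ↔ x ∈ thickening ρ (primitiveZeros q))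
      := by
    rcases eq_or_ne q 0 with rfl | hq
    · exact ⟨0, le_rfl, fun h => absurd rfl h⟩
    · obtain ⟨ρ, hρ, h_iff⟩ :=
        exists_mul_infDist_lt_iff_mem_thickening (primitiveZeros_nonempty hq) (hc q) (B q)
      exact ⟨ρ, hρ, fun _ => h_iff⟩
  choose ρ hρ h_iff using h_radius
  have h_eq : {x | ∃ᶠ q in cofinite, c q * infDist x (primitiveZeros q) < B q} =
      limsupStrips ρ Set.univ := by
    ext x
    refine frequently_congr ?_
    filter_upwards [(Set.finite_singleton 0).eventually_cofinite_notMem] with q hq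
    rw [h_iff q hq x]
    exact (and_iff_right trivial).symm
  rw [h_eq]
  exact eventuallyConst_limsupStrips hρ

end Gallagher

section LinearForms

variable {ι κ : Type*} [Fintype ι] [Fintype κ]

/-- The analogue of `DmulLF` for systems `Y` of linear forms modulo `1`, one for each element of
`κ`: the factor `l1Norm q * infDist (Y i) (primitiveZeros q)` is the smallest `|q · y + p|` over
the lifts `y` of `Y i` and the integers `p` coprime to `q`. -/
def torusDmulLF (κ : Type*) [Fintype κ] (Ψ : (ι → ℤ) → ℝ) : Set (κ → UnitAddTorus ι) :=
  {Y | ∃ᶠ q in cofinite, ∏ i, (l1Norm q * infDist (Y i) (primitiveZeros q)) < Ψ q}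

theorem measurableSet_torusDmulLF (Ψ : (ι → ℤ) → ℝ) : MeasurableSet (torusDmulLF κ Ψ) :=
  measurableSet_setOf_frequently_cofinite_s8 fun q => measurableSet_lt (by fun_prop) measurable_const

theorem eventuallyConst_torusDmulLF (Ψ : (ι → ℤ) → ℝ) :
    EventuallyConst (torusDmulLF κ Ψ) (ae volume) := by
  classical
  refine eventuallyConst_pi_of_forall_update (measurableSet_torusDmulLF Ψ) fun Y i => ?_
  have h_fiber : {y | update Y i y ∈ torusDmulLF κ Ψ} = {y | ∃ᶠ q in cofinite,
      ((∏ k ∈ Finset.univ.erase i, (l1Norm q * infDist (Y k) (primitiveZeros q))) * l1Norm q) *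
        infDist y (primitiveZeros q) < Ψ q} := by
    ext y
    refine frequently_congr (.of_forall fun q => ?_)
    rw [← Finset.prod_erase_mul _ _ (Finset.mem_univ i), update_self, ← mul_assoc,
      Finset.prod_congr rfl fun k hk => by rw [update_of_ne (Finset.ne_of_mem_erase hk)]]
  rw [h_fiber]
  refine eventuallyConst_setOf_frequently_mul_infDist_lt (fun q => ?_) Ψ
  have hN := l1Norm_nonneg q
  exact mul_nonneg (Finset.prod_nonneg fun k _ => mul_nonneg hN infDist_nonneg) hN

/-- The system of linear forms modulo `1` given by the columns of a real matrix. -/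
def columnsToTorus (X : ι → κ → ℝ) : κ → UnitAddTorus ι := fun i => toUnitAddTorus fun j => X j i

theorem measurePreserving_columnsToTorus :
    MeasurePreserving (columnsToTorus : (ι → κ → ℝ) → κ → UnitAddTorus ι)
      (volume.restrict (Set.univ.pi fun _ => Set.univ.pi fun _ => Set.Icc 0 1)) := by
  have h_circle : MeasurePreserving ((↑) : ℝ → UnitAddCircle) (volume.restrict (Set.Icc 0 1)) := by
    simpa only [zero_add, restrict_Ioc_eq_restrict_Icc] using UnitAddCircle.measurePreserving_mk 0
  have h_pi := (measurePreserving_swap_pi fun _ _ => volume).comp <|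
    measurePreserving_pi (fun _ : ι => _) _ fun _ => measurePreserving_pi (fun _ : κ => _) _
      fun _ => h_circle
  simp only [← Measure.restrict_pi_pi] at h_pi
  exact h_pi

theorem ae_sum_mul_add_ne_zero {q : ι → ℤ} (hq : q ≠ 0) (i : κ) (c : ℝ) :
    ∀ᵐ X : ι → κ → ℝ, ∑ j, (q j : ℝ) * X j i + c ≠ 0 := by
  classical
  obtain ⟨j₀, hj₀⟩ := ne_iff.1 hq
  have hj₀' : (q j₀ : ℝ) ≠ 0 := Int.cast_ne_zero.2 hj₀
  refine ae_pi_of_forall_ae_update (μ := fun _ => volume) j₀ ?_ fun X => ?_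
  · exact (isOpen_ne_fun (by fun_prop) continuous_const).measurableSet
  · have h_ne := (Measure.quasiMeasurePreserving_eval (fun _ : κ => (volume : Measure ℝ)) i).ae
      (Measure.ae_ne volume (-(∑ j ∈ Finset.univ.erase j₀, (q j : ℝ) * X j i + c) / q j₀))
    filter_upwards [h_ne] with t ht h_zero
    rw [← Finset.add_sum_erase _ _ (Finset.mem_univ j₀), update_self,
      Finset.sum_congr rfl fun j hj => by rw [update_of_ne (Finset.ne_of_mem_erase hj)]] at h_zero
    refine ht ((eq_div_iff hj₀').2 ?_)
    simp only [eval]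
    linear_combination h_zero

theorem finite_setOf_prod_abs_add_lt_s8 {a : κ → ℝ} (ha : ∀ i (p : ℤ), a i + p ≠ 0) (B : ℝ) :
    {p : κ → ℤ | ∏ i, |a i + p i| < B}.Finite := by
  classical
  have h_dist (i : κ) : ∃ δ > 0, ∀ p : ℤ, δ ≤ |a i + p| := by
    obtain ⟨p, h_min⟩ := (tendsto_abs_add_intCast_cofinite (a i)).exists_forall_le
    exact ⟨_, abs_pos.2 (ha i p), h_min⟩
  choose δ hδ h_le using h_dist
  set D : κ → ℝ := fun i => ∏ k ∈ Finset.univ.erase i, δ k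
  have hD_pos (i : κ) : 0 < D i := Finset.prod_pos fun k _ => hδ k
  have h_fin (i : κ) : {p : ℤ | ¬B / D i ≤ |a i + p|}.Finite := eventually_cofinite.1
    ((tendsto_abs_add_intCast_cofinite (a i)).eventually_ge_atTop _)
  refine (Set.Finite.pi' h_fin).subset fun p (hp : ∏ i, |a i + p i| < B) i => ?_
  change ¬B / D i ≤ |a i + p i|
  rw [div_le_iff₀ (hD_pos i), not_le]
  refine lt_of_le_of_lt ?_ hp
  rw [← Finset.mul_prod_erase _ _ (Finset.mem_univ i)]
  exact mul_le_mul_of_nonneg_left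
    (Finset.prod_le_prod (fun k _ => (hδ k).le) fun k _ => h_le k (p k)) (abs_nonneg _)

theorem exists_isCoprime_prod_lt_iff {q : ι → ℤ} (hq : q ≠ 0) (X : ι → κ → ℝ) (B : ℝ) :
    (∃ p : κ → ℤ, (∀ i, IsCoprime (p i) (Finset.univ.gcd q)) ∧
      ∏ i, |∑ j, (q j : ℝ) * X j i + p i| < B) ↔
      ∏ i, (l1Norm q * infDist (columnsToTorus X i) (primitiveZeros q)) < B := by
  constructor
  · rintro ⟨p, hp, h_lt⟩
    refine lt_of_le_of_lt (Finset.prod_le_prod ?_ ?_) h_lt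
    · exact fun i _ => mul_nonneg (l1Norm_nonneg q) infDist_nonneg
    · exact fun i _ => l1Norm_mul_infDist_primitiveZeros_le hq (hp i) _
  · intro h_lt
    choose p hp h_le using fun i => exists_isCoprime_abs_le_l1Norm_mul_infDist hq fun j => X j i
    exact ⟨p, hp, (Finset.prod_le_prod (fun i _ => abs_nonneg _) fun i _ => h_le i).trans_lt h_lt⟩

theorem infinite_setOf_isCoprime_prod_lt_iff {X : ι → κ → ℝ}
    (hX : ∀ q : ι → ℤ, q ≠ 0 → ∀ i (p : ℤ), ∑ j, (q j : ℝ) * X j i + p ≠ 0) (Ψ : (ι → ℤ) → ℝ) :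
    {pq : (κ → ℤ) × (ι → ℤ) | pq.2 ≠ 0 ∧ (∀ i, IsCoprime (pq.1 i) (Finset.univ.gcd pq.2)) ∧
      ∏ i, |∑ j, (pq.2 j : ℝ) * X j i + pq.1 i| < Ψ pq.2}.Infinite ↔
      columnsToTorus X ∈ torusDmulLF κ Ψ := by
  set S := {pq : (κ → ℤ) × (ι → ℤ) | pq.2 ≠ 0 ∧
    (∀ i, IsCoprime (pq.1 i) (Finset.univ.gcd pq.2)) ∧
    ∏ i, |∑ j, (pq.2 j : ℝ) * X j i + pq.1 i| < Ψ pq.2}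
  have h_fiber (q : ι → ℤ) : (S ∩ Prod.snd ⁻¹' {q}).Finite := by
    rcases eq_or_ne q 0 with rfl | hq
    · exact Set.finite_empty.subset fun pq hpq => hpq.1.1 hpq.2
    · refine ((finite_setOf_prod_abs_add_lt_s8 (hX q hq) (Ψ q)).image (·, q)).subset ?_
      rintro ⟨p, q⟩ ⟨⟨-, -, h_lt⟩, rfl⟩
      exact ⟨p, h_lt, rfl⟩
  have h_image : S.Infinite ↔ (Prod.snd '' S).Infinite :=
    ⟨fun h h_fin => h (.of_finite_fibers _ h_fin fun q _ => h_fiber q), .of_image _⟩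
  rw [h_image, ← frequently_cofinite_mem_iff_infinite]
  refine frequently_congr ?_
  filter_upwards [(Set.finite_singleton 0).eventually_cofinite_notMem] with q hq
  rw [← exists_isCoprime_prod_lt_iff hq]
  constructor
  · rintro ⟨⟨p, q⟩, ⟨-, h⟩, rfl⟩
    exact ⟨p, h⟩
  · rintro ⟨p, h⟩
    exact ⟨(p, q), ⟨hq, h⟩, rfl⟩

end LinearForms

theorem mem_DmulLF_iff {m n : ℕ} {Ψ : (Fin m → ℤ) → ℝ} {X : Fin m → Fin n → ℝ}
    (hX : ∀ q : Fin m → ℤ, q ≠ 0 → ∀ i (p : ℤ), ∑ j, (q j : ℝ) * X j i + p ≠ 0) :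
    X ∈ DmulLF m n Ψ ↔
      X ∈ columnsToTorus ⁻¹' torusDmulLF (Fin n) Ψ ∩
        Set.univ.pi fun _ => Set.univ.pi fun _ => Set.Icc (0 : ℝ) 1 := by
  rw [Set.mem_inter_iff, and_comm, Set.mem_preimage,
    ← infinite_setOf_isCoprime_prod_lt_iff hX Ψ]
  simp only [DmulLF, Set.mem_ofPred_eq, Set.mem_univ_pi, Int.isCoprime_iff_gcd_eq_one]

/-- Zero-one law for the multiplicative linear forms set with coprimality: for
any `m, n ≥ 1` and any non-negative `Ψ : ℤ^m → [0,∞)`, the `mn`-dimensional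
Lebesgue measure of `D^×_{m,n}(Ψ)` is either 0 or 1. -/
theorem linear_forms_zero_one_law_D (m n : ℕ) (hm : 1 ≤ m) (hn : 1 ≤ n)
    (Ψ : (Fin m → ℤ) → ℝ) (hΨ : ∀ q, 0 ≤ Ψ q) :
    volume (DmulLF m n Ψ) = 0 ∨ volume (DmulLF m n Ψ) = 1 := by
  have h_generic : ∀ᵐ X : Fin m → Fin n → ℝ, ∀ q : Fin m → ℤ, q ≠ 0 → ∀ i (p : ℤ),
      ∑ j, (q j : ℝ) * X j i + p ≠ 0 := by
    simp only [ae_all_iff]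
    exact fun q hq i p => ae_sum_mul_add_ne_zero hq i p
  have h_volume : volume (DmulLF m n Ψ) = volume (torusDmulLF (Fin n) Ψ) := by
    have h_meas := measurableSet_torusDmulLF (κ := Fin n) Ψ
    rw [← measurePreserving_columnsToTorus.measure_preimage h_meas.nullMeasurableSet,
      Measure.restrict_apply (measurePreserving_columnsToTorus.measurable h_meas)]
    exact measure_congr (eventuallyEq_set.2 (h_generic.mono fun X hX => mem_DmulLF_iff hX))
  rw [h_volume]
  rcases eventuallyConst_set.1 (eventuallyConst_torusDmulLF (κ := Fin n) Ψ) with h_full | h_null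
  · exact .inr ((mem_ae_iff_prob_eq_one (measurableSet_torusDmulLF Ψ)).1 h_full)
  · exact .inl (measure_eq_zero_iff_ae_notMem.2 h_null)
end
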